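/- arXiv:1603.02310 — 2 statements merged into one kernel-verified Lean document; each statement's English description precedes it below -/
import Mathlib

section
/- Let G be an internally 4-connected nonplanar graph that is a minor of some Möbius ladder. Then G is isomorphic to M_n or to C²_{2n−1} for some integer n ≥ 3. -/
open SimpleGraph

/-- `H` is a minor of `G` (branch-set / model definition). -/
def IsMinor {W V : Type*} (H : SimpleGraph W) (G : SimpleGraph V) : Prop :=
  ∃ B : W → Set V,
    (∀ w, (B w).Nonempty) ∧
    (∀ w, (G.induce (B w)).Connected) ∧
    (Pairwise fun w₁ w₂ => Disjoint (B w₁) (B w₂)) ∧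
    (∀ ⦃w₁ w₂ : W⦄, H.Adj w₁ w₂ → ∃ v₁ ∈ B w₁, ∃ v₂ ∈ B w₂, G.Adj v₁ v₂)

def K5 : SimpleGraph (Fin 5) := ⊤

def K33 : SimpleGraph (Fin 3 ⊕ Fin 3) := completeBipartiteGraph (Fin 3) (Fin 3)

/-- A graph is planar iff it has neither a `K₅` nor a `K₃,₃` minor (Wagner's theorem). -/
def Planar {V : Type*} (G : SimpleGraph V) : Prop := ¬ IsMinor K5 G ∧ ¬ IsMinor K33 G

/-- `G / uw`: contract the edge `uw`, merging `w` into `u` (the vertex `w` becomes isolated). -/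
def contractEdge {V : Type*} (G : SimpleGraph V) (u w : V) : SimpleGraph V :=
  SimpleGraph.fromRel fun a b =>
    a ≠ w ∧ b ≠ w ∧ (G.Adj a b ∨ (a = u ∧ G.Adj w b) ∨ (b = u ∧ G.Adj a w))

/-- A nonplanar graph is almost-planar if for every edge, deletion or contraction is planar. -/
def AlmostPlanar {V : Type*} (G : SimpleGraph V) : Prop :=
  ¬ Planar G ∧ ∀ ⦃u v : V⦄, G.Adj u v →
    (Planar (G.deleteEdges {s(u, v)}) ∨ Planar (contractEdge G u v))

/-- `G` is `k`-connected: more than `k` vertices and deleting fewer than `k` vertices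
leaves a connected graph. -/
def KConnected {V : Type*} (G : SimpleGraph V) (k : ℕ) : Prop :=
  k < Nat.card V ∧ ∀ s : Set V, s.ncard < k → (G.induce (sᶜ)).Connected

/-- `{G[A], G[B]}` is a `k`-separation of `G`. -/
def IsSep {V : Type*} (G : SimpleGraph V) (k : ℕ) (A B : Set V) : Prop :=
  A ∪ B = Set.univ ∧ A ≠ Set.univ ∧ B ≠ Set.univ ∧ (A ∩ B).ncard = k ∧
  ∀ ⦃x y : V⦄, G.Adj x y → (x ∈ A ∧ y ∈ A) ∨ (x ∈ B ∧ y ∈ B)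

/-- The star `K_{1,3}`, with centre `0`. -/
def K13 : SimpleGraph (Fin 4) := SimpleGraph.fromRel fun a _ => a = 0

def InternallyFourConnected {V : Type*} (G : SimpleGraph V) : Prop :=
  KConnected G 3 ∧ 5 ≤ Nat.card V ∧
  ∀ A B : Set V, IsSep G 3 A B →
    Xor' (Nonempty (G.induce A ≃g K13)) (Nonempty (G.induce B ≃g K13))

/-- The wheel `W_n`: a cycle of length `n` plus a hub (`none`) joined to all of it. -/
def wheelGraph (n : ℕ) : SimpleGraph (Option (Fin n)) :=
  SimpleGraph.fromRel fun a b =>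
    match a, b with
    | some i, some j => j.val = (i.val + 1) % n
    | none, some _ => True
    | _, _ => False

def IsWheel {V : Type*} (G : SimpleGraph V) : Prop :=
  ∃ n, 3 ≤ n ∧ Nonempty (G ≃g wheelGraph n)

/-- The double wheel `DW_n`: a cycle of length `n` plus two adjacent hubs joined to all of it. -/
def doubleWheel (n : ℕ) : SimpleGraph (Fin n ⊕ Fin 2) :=
  SimpleGraph.fromRel fun a b =>
    match a, b with
    | .inl i, .inl j => j.val = (i.val + 1) % n
    | .inl _, .inr _ => True
    | .inr _, .inr _ => True
    | _, _ => False

/-- The Möbius ladder `M_n`: a cycle of length `2n` plus all "opposite" chords. -/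
def mobiusLadder (n : ℕ) : SimpleGraph (Fin (2 * n)) :=
  SimpleGraph.fromRel fun i j =>
    j.val = (i.val + 1) % (2 * n) ∨ j.val = (i.val + n) % (2 * n)

/-- `C²_m`: a cycle of length `m` plus all chords between vertices at distance two. -/
def squareCycle (m : ℕ) : SimpleGraph (Fin m) :=
  SimpleGraph.fromRel fun i j =>
    j.val = (i.val + 1) % m ∨ j.val = (i.val + 2) % m

/-- The alternating double wheel `AW_{2n}`: a cycle of length `2n` plus two adjacent hubs,
each joined to alternating cycle vertices. -/
def altDoubleWheel (n : ℕ) : SimpleGraph (Fin (2 * n) ⊕ Fin 2) :=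
  SimpleGraph.fromRel fun a b =>
    match a, b with
    | .inl i, .inl j => j.val = (i.val + 1) % (2 * n)
    | .inl i, .inr k => i.val % 2 = k.val
    | .inr _, .inr _ => True
    | _, _ => False

/-- The class `𝒲`: three wheels glued along a common triangle `V₀`, with no other edges. -/
def InClassW {V : Type*} (G : SimpleGraph V) : Prop :=
  ∃ P : V → Fin 4,
    (P ⁻¹' {0}).ncard = 3 ∧
    (∀ x y : V, P x = 0 → P y = 0 → x ≠ y → G.Adj x y) ∧
    (∀ i : Fin 4, i ≠ 0 → IsWheel (G.induce {v | P v = 0 ∨ P v = i})) ∧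
    (∀ ⦃x y : V⦄, G.Adj x y → ∃ i : Fin 4, i ≠ 0 ∧ (P x = 0 ∨ P x = i) ∧ (P y = 0 ∨ P y = i))

/-- `EX₁`: `K₃,₃` plus a vertex joined to all of one colour class. -/
def EX1 : SimpleGraph (Option (Fin 3 ⊕ Fin 3)) :=
  SimpleGraph.fromRel fun a b =>
    match a, b with
    | some (.inl _), some (.inr _) => True
    | none, some (.inl _) => True
    | _, _ => False

/-- `EX₂`: `K₅` plus a vertex joined to three of its vertices. -/
def EX2 : SimpleGraph (Option (Fin 5)) :=
  SimpleGraph.fromRel fun a b =>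
    match a, b with
    | some i, some j => i ≠ j
    | none, some j => j.val < 3
    | _, _ => False

/-- `EX₈`: `K₃,₃` plus a vertex joined to two vertices of one class and one of the other. -/
def EX8 : SimpleGraph (Option (Fin 3 ⊕ Fin 3)) :=
  SimpleGraph.fromRel fun a b =>
    match a, b with
    | some (.inl _), some (.inr _) => True
    | none, some x => x = Sum.inl 0 ∨ x = Sum.inl 1 ∨ x = Sum.inr 0
    | _, _ => False

/-- `K₅ʰ`: subdivide the edges `01` and `02` of `K₅` and join the two subdivision vertices. -/
def K5h : SimpleGraph (Fin 5 ⊕ Fin 2) :=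
  SimpleGraph.fromRel fun a b =>
    match a, b with
    | .inl i, .inl j =>
        i ≠ j ∧ ¬(i = 0 ∧ j = 1) ∧ ¬(i = 1 ∧ j = 0) ∧ ¬(i = 0 ∧ j = 2) ∧ ¬(i = 2 ∧ j = 0)
    | .inl i, .inr k => (k = 0 ∧ (i = 0 ∨ i = 1)) ∨ (k = 1 ∧ (i = 0 ∨ i = 2))
    | .inr _, .inr _ => True
    | _, _ => False

/-- `K₃,₃ʰ`: subdivide two edges of `K₃,₃` at a common endpoint and join
the two subdivision vertices. -/
def K33h : SimpleGraph ((Fin 3 ⊕ Fin 3) ⊕ Fin 2) :=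
  SimpleGraph.fromRel fun a b =>
    match a, b with
    | .inl (.inl i), .inl (.inr j) => ¬(i = 0 ∧ (j = 0 ∨ j = 1))
    | .inl (.inr j), .inl (.inl i) => ¬(i = 0 ∧ (j = 0 ∨ j = 1))
    | .inl x, .inr k =>
        (k = 0 ∧ (x = Sum.inl 0 ∨ x = Sum.inr 0)) ∨ (k = 1 ∧ (x = Sum.inl 0 ∨ x = Sum.inr 1))
    | .inr _, .inr _ => True
    | _, _ => False

/-- `K₅⁺`: `K₅` plus a pendant vertex. -/
def K5plus : SimpleGraph (Option (Fin 5)) :=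
  SimpleGraph.fromRel fun a b =>
    match a, b with
    | some i, some j => i ≠ j
    | none, some j => j = 0
    | _, _ => False

/-- `K₃,₃⁺`: `K₃,₃` plus a pendant vertex. -/
def K33plus : SimpleGraph (Option (Fin 3 ⊕ Fin 3)) :=
  SimpleGraph.fromRel fun a b =>
    match a, b with
    | some (.inl _), some (.inr _) => True
    | none, some x => x = Sum.inl 0
    | _, _ => False

/-- `K₅ ⊕ e`: disjoint union of `K₅` and one edge. -/
def K5oplus : SimpleGraph (Fin 5 ⊕ Fin 2) :=
  SimpleGraph.fromRel fun a b =>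
    match a, b with
    | .inl i, .inl j => i ≠ j
    | .inr _, .inr _ => True
    | _, _ => False

/-- `K₃,₃ ⊕ e`: disjoint union of `K₃,₃` and one edge. -/
def K33oplus : SimpleGraph ((Fin 3 ⊕ Fin 3) ⊕ Fin 2) :=
  SimpleGraph.fromRel fun a b =>
    match a, b with
    | .inl (.inl _), .inl (.inr _) => True
    | .inr _, .inr _ => True
    | _, _ => False

/-- The triad addition of `H` at `x y z`: add a new vertex joined to `x`, `y`, `z`. -/
def triadAddition {U : Type*} (H : SimpleGraph U) (x y z : U) : SimpleGraph (Option U) :=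
  SimpleGraph.fromRel fun a b =>
    match a, b with
    | some u, some v => H.Adj u v
    | none, some u => u = x ∨ u = y ∨ u = z
    | _, _ => False

def IsTriadAdditionOf {V U : Type*} (G : SimpleGraph V) (H : SimpleGraph U) : Prop :=
  ∃ x y z : U, x ≠ y ∧ y ≠ z ∧ x ≠ z ∧ Nonempty (G ≃g triadAddition H x y z)

/-- `G` is obtained from `H` by subdividing (possibly repeatedly) edges of `H`,
all of which lie in `S`. -/
def IsSubdivisionWithin {V W : Type*} (G : SimpleGraph V) (H : SimpleGraph W)
    (S : Set (Sym2 W)) : Prop :=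
  ∃ (f : W ↪ V) (p : ∀ ⦃u v : W⦄, H.Adj u v → G.Walk (f u) (f v)),
    (∀ ⦃u v : W⦄ (h : H.Adj u v), (p h).IsPath) ∧
    (∀ ⦃u v : W⦄ (h : H.Adj u v), p h.symm = (p h).reverse) ∧
    (∀ ⦃u v : W⦄ (h : H.Adj u v), s(u, v) ∉ S → (p h).length = 1) ∧
    (∀ ⦃u v : W⦄ (h : H.Adj u v) (w : W), f w ∈ (p h).support → w = u ∨ w = v) ∧
    (∀ ⦃u v u' v' : W⦄ (h : H.Adj u v) (h' : H.Adj u' v'), s(u, v) ≠ s(u', v') →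
      ∀ x : V, x ∈ (p h).support → x ∈ (p h').support → x ∈ Set.range f) ∧
    (∀ x : V, x ∈ Set.range f ∨ ∃ (u v : W) (h : H.Adj u v), x ∈ (p h).support) ∧
    (∀ e ∈ G.edgeSet, ∃ (u v : W) (h : H.Adj u v), e ∈ (p h).edges)

/-- `G` is a subdivision of `H`. -/
def IsSubdivision {V W : Type*} (G : SimpleGraph V) (H : SimpleGraph W) : Prop :=
  IsSubdivisionWithin G H Set.univ

/-- `D(H)`: the set of edges of `H` whose deletion leaves a planar graph. -/
def Dset {U : Type*} (H : SimpleGraph U) : Set (Sym2 U) :=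
  {e | e ∈ H.edgeSet ∧ Planar (H.deleteEdges {e})}

/-- `G[A]` together with all edges between vertices of `T` (`T ⊆ A` intended). -/
def deltaGraph {V : Type*} (G : SimpleGraph V) (A T : Set V) : SimpleGraph A :=
  SimpleGraph.fromRel fun a b => G.Adj a.1 b.1 ∨ (a.1 ∈ T ∧ b.1 ∈ T)

/-- `G[A]^Y` for the separation `{G[A], G[B]}`: add a new vertex joined to `A ∩ B`. -/
def sepY {V : Type*} (G : SimpleGraph V) (A B : Set V) : SimpleGraph (Option A) :=
  SimpleGraph.fromRel fun x y =>
    match x, y with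
    | some a, some b => G.Adj a.1 b.1
    | none, some a => a.1 ∈ A ∩ B
    | _, _ => False

/-- `G₂` is obtained from `G` by adding isolated vertices. -/
def AddIsolated {V₂ V : Type*} (G₂ : SimpleGraph V₂) (G : SimpleGraph V) : Prop :=
  ∃ f : V ↪ V₂, (∀ a b : V, G₂.Adj (f a) (f b) ↔ G.Adj a b) ∧
    ∀ x : V₂, x ∉ Set.range f → ∀ y : V₂, ¬ G₂.Adj x y

/-- The set of non-isolated vertices of `G` (so `G* = G.induce (core G)`). -/
def core {V : Type*} (G : SimpleGraph V) : Set V := {v | ∃ w, G.Adj v w}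

/-- `G` is obtained from `G'` by 3-summing wheels onto distinct triangles of `G'`. -/
def SumWheelsOnto {V U : Type*} (G : SimpleGraph V) (G' : SimpleGraph U) : Prop :=
  ∃ (g : U ↪ V) (k : ℕ) (Wp : Fin k → Set V) (T : Fin k → Set U),
    (∀ i, (T i).ncard = 3) ∧
    (∀ i, ∀ x ∈ T i, ∀ y ∈ T i, x ≠ y → G'.Adj x y) ∧
    Function.Injective T ∧
    (∀ i, Disjoint (Wp i) (Set.range ⇑g)) ∧
    (Pairwise fun i j => Disjoint (Wp i) (Wp j)) ∧
    (Set.range ⇑g ∪ ⋃ i, Wp i) = Set.univ ∧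
    (∀ i, IsWheel (deltaGraph G (Wp i ∪ ⇑g '' T i) (⇑g '' T i))) ∧
    (∀ a b : U, G.Adj (g a) (g b) → G'.Adj a b) ∧
    (∀ a b : U, G'.Adj a b → (G.Adj (g a) (g b) ∨ ∃ i, a ∈ T i ∧ b ∈ T i)) ∧
    (∀ ⦃x y : V⦄, G.Adj x y → (x ∈ Set.range ⇑g ∧ y ∈ Set.range ⇑g) ∨
      ∃ i, x ∈ Wp i ∪ ⇑g '' T i ∧ y ∈ Wp i ∪ ⇑g '' T i) ∧
    (∀ i, ∀ x ∈ Wp i, ∀ ⦃y : V⦄, G.Adj x y → y ∈ Wp i ∪ ⇑g '' T i)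

/-- `H` has an edge whose deletion and contraction are both nonplanar. -/
def HasBadEdge {V : Type*} (H : SimpleGraph V) : Prop :=
  ∃ u v : V, H.Adj u v ∧ ¬ Planar (H.deleteEdges {s(u, v)}) ∧ ¬ Planar (contractEdge H u v)


/-! ### Connectivity lemmas -/

namespace Mob

set_option linter.unusedSectionVars false

variable {V : Type} [Fintype V] {G : SimpleGraph V}

/-- A small cut cannot separate. -/
lemma small_cut (h : KConnected G 3) (A B S : Set V) (hAB : A ∪ B = Set.univ)
    (he : ∀ ⦃x y : V⦄, G.Adj x y → (x ∈ A ∧ y ∈ A) ∨ (x ∈ B ∧ y ∈ B))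
    (hS : A ∩ B ⊆ S) (hSc : S.ncard < 3) {a b : V} (ha : a ∈ A) (haS : a ∉ S)
    (hb : b ∈ B) (hbS : b ∉ S) : False := by
  have hc := h.2 S hSc
  have hr := hc.preconnected ⟨a, haS⟩ ⟨b, hbS⟩
  have key : ∀ x y : (Sᶜ : Set V), (G.induce Sᶜ).Walk x y → x.1 ∈ A → y.1 ∈ A := by
    intro x y p
    induction p with
    | nil => exact id
    | @cons u v w huv p ih =>
      intro hu
      apply ih
      have h1 : G.Adj u.1 v.1 := huv
      rcases he h1 with h2 | h2
      · exact h2.2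
      · exact absurd (hS ⟨hu, h2.1⟩) u.2
  obtain ⟨p⟩ := hr
  exact hbS (hS ⟨key _ _ p ha, hb⟩)

lemma ncard_two (y z : V) : ({y, z} : Set V).ncard ≤ 2 := by
  classical
  have := Set.ncard_insert_le y {z}
  simp only [Set.ncard_singleton] at this
  omega

lemma deg_three (h : KConnected G 3) (x a b : V)
    (hn : ∀ y, G.Adj x y → y = a ∨ y = b) : False := by
  classical
  have hcard := h.1
  obtain ⟨c, hc⟩ : ∃ c : V, c ∉ ({x, a, b} : Finset V) := by
    by_contra hcon
    push Not at hcon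
    have : Nat.card V ≤ 3 := by
      rw [Nat.card_eq_fintype_card]
      have h1 : (Finset.univ : Finset V) ⊆ {x, a, b} := fun c _ => hcon c
      have := Finset.card_le_card h1
      have h3 := Finset.card_le_three (a := x) (b := a) (c := b)
      simp only [Finset.card_univ] at this
      omega
    omega
  simp only [Finset.mem_insert, Finset.mem_singleton, not_or] at hc
  refine small_cut h {x, a, b} {y | y ≠ x} ({a, b} \ {x}) ?_ ?_ ?_ ?_ (a := x) (b := c) ?_ ?_ ?_ ?_
  · ext y; by_cases hy : y = x <;> simp [hy]
  · intro y z hyz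
    by_cases hy : y = x
    · subst hy
      left
      have := hn z hyz
      simp; tauto
    · by_cases hz : z = x
      · subst hz
        have := hn y hyz.symm
        left; simp; tauto
      · right; exact ⟨hy, hz⟩
  · rintro y ⟨h1, h2⟩
    simp at h1 h2 ⊢; tauto
  · have := ncard_two a b
    have h2 : (({a, b} : Set V) \ {x}).ncard ≤ ({a, b} : Set V).ncard :=
      Set.ncard_le_ncard Set.sdiff_subset (Set.toFinite _)
    omega
  · simp
  · simp
  · exact hc.1
  · simp; tauto

/-- In an isomorphic copy of the star, a vertex of `A \ B` must be the centre. -/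
lemma star_absurd (h : KConnected G 3) (A B : Set V)
    (he : ∀ ⦃x y : V⦄, G.Adj x y → (x ∈ A ∧ y ∈ A) ∨ (x ∈ B ∧ y ∈ B))
    (hB : B ≠ Set.univ) (hAB : A ∪ B = Set.univ) {y z : V} (hy : y ∈ A ∩ B) (hz : z ∈ A ∩ B)
    (hyz : G.Adj y z) (φ : G.induce A ≃g K13) : False := by
  obtain ⟨c, hc⟩ := (Set.ne_univ_iff_exists_notMem B).1 hB
  have hcA : c ∈ A := by
    have : c ∈ A ∪ B := by rw [hAB]; trivial
    exact this.resolve_right hc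
  have kadj : ∀ i j : Fin 4, K13.Adj i j → i = 0 ∨ j = 0 := by
    intro i j hij
    simp only [K13, SimpleGraph.fromRel_adj] at hij
    exact hij.2
  have hc0 : φ ⟨c, hcA⟩ = 0 := by
    by_contra hne
    refine deg_three h c (φ.symm 0).1 (φ.symm 0).1 ?_
    intro w hw
    have hwA : w ∈ A := by
      rcases he hw with h1 | h1
      · exact h1.2
      · exact absurd h1.1 hc
    have h2 : (G.induce A).Adj ⟨c, hcA⟩ ⟨w, hwA⟩ := hw
    have h3 := (φ.map_adj_iff).2 h2
    rcases kadj _ _ h3 with h4 | h4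
    · exact absurd h4 hne
    · left
      rw [← h4]; simp
  have h2 : (G.induce A).Adj ⟨y, hy.1⟩ ⟨z, hz.1⟩ := hyz
  have h3 := (φ.map_adj_iff).2 h2
  rcases kadj _ _ h3 with h4 | h4
  · rw [← hc0] at h4
    have : y = c := congrArg Subtype.val (φ.injective h4)
    exact hc (this ▸ hy.2)
  · rw [← hc0] at h4
    have : z = c := congrArg Subtype.val (φ.injective h4)
    exact hc (this ▸ hz.2)

lemma sep (h : InternallyFourConnected G) (A B : Set V) (hAB : A ∪ B = Set.univ)
    (he : ∀ ⦃x y : V⦄, G.Adj x y → (x ∈ A ∧ y ∈ A) ∨ (x ∈ B ∧ y ∈ B)) (x y z : V)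
    (hS : A ∩ B ⊆ {x, y, z}) (hyz : y = z ∨ G.Adj y z) : A = Set.univ ∨ B = Set.univ := by
  by_contra hcon
  push Not at hcon
  obtain ⟨hA, hB⟩ := hcon
  obtain ⟨a, ha⟩ := (Set.ne_univ_iff_exists_notMem B).1 hB
  obtain ⟨b, hb⟩ := (Set.ne_univ_iff_exists_notMem A).1 hA
  have haA : a ∈ A := by
    have : a ∈ A ∪ B := by rw [hAB]; trivial
    exact this.resolve_right ha
  have hbB : b ∈ B := by
    have : b ∈ A ∪ B := by rw [hAB]; trivial
    exact this.resolve_left hb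
  have hlt : ¬ (A ∩ B).ncard < 3 := fun hlt =>
    small_cut h.1 A B (A ∩ B) hAB he subset_rfl hlt haA (fun h => ha h.2) hbB (fun h => hb h.1)
  have hne : y ≠ z := by
    rintro rfl
    apply hlt
    have h1 := Set.ncard_le_ncard hS (Set.toFinite _)
    have h2 := ncard_two x y
    have h3 : ({x, y, y} : Set V) = {x, y} := by simp
    rw [h3] at h1
    omega
  have hadj := hyz.resolve_left hne
  have h3le : ({x, y, z} : Set V).ncard ≤ 3 := by
    have := Set.ncard_insert_le x {y, z}
    have h2 := ncard_two y z
    omega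
  have h1 := Set.ncard_le_ncard hS (Set.toFinite _)
  have heq : A ∩ B = {x, y, z} := Set.eq_of_subset_of_ncard_le hS (by omega) (Set.toFinite _)
  have hy : y ∈ A ∩ B := by rw [heq]; simp
  have hz : z ∈ A ∩ B := by rw [heq]; simp
  rcases h.2.2 A B ⟨hAB, hA, hB, by omega, he⟩ with ⟨⟨φ⟩, _⟩ | ⟨⟨φ⟩, _⟩
  · exact star_absurd h.1 A B he hB hAB hy hz hadj φ
  · exact star_absurd h.1 B A (fun _ _ hx => (he hx).symm) hA (by rw [Set.union_comm, hAB])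
      ⟨hy.2, hy.1⟩ ⟨hz.2, hz.1⟩ hadj φ

/-- No vertex has its neighbourhood inside `{a, b, c}` with `b = c` or `b ~ c`. -/
lemma no_tri (h : InternallyFourConnected G) (x a b c : V)
    (hn : ∀ y, G.Adj x y → y = a ∨ y = b ∨ y = c) (hbc : b = c ∨ G.Adj b c) : False := by
  classical
  have := sep h {x, a, b, c} {y | y ≠ x} ?_ ?_ a b c ?_ hbc
  · rcases this with h1 | h1
    · have hc := h.2.1
      rw [← Set.ncard_univ, ← h1] at hc
      have h2 := Set.ncard_insert_le x {a, b, c}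
      have h3 := Set.ncard_insert_le a {b, c}
      have h4 := ncard_two b c
      omega
    · have : x ∈ {y | y ≠ x} := by rw [h1]; trivial
      exact this rfl
  · ext y; by_cases hy : y = x <;> simp [hy]
  · intro y z hyz
    by_cases hy : y = x
    · subst hy
      left
      have := hn z hyz
      simp; tauto
    · by_cases hz : z = x
      · subst hz
        have := hn y hyz.symm
        left; simp; tauto
      · right; exact ⟨hy, hz⟩
  · rintro y ⟨h1, h2⟩
    simp at h1 h2 ⊢; tauto

lemma k5_of_card (h : InternallyFourConnected G) (hc : Fintype.card V ≤ 5) :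
    Nonempty (G ≃g squareCycle 5) := by
  classical
  have h5 : Fintype.card V = 5 := by
    have := h.2.1
    rw [Nat.card_eq_fintype_card] at this
    omega
  have hG : ∀ x y : V, x ≠ y → G.Adj x y := by
    intro x y hxy
    by_contra hna
    have hcard : (Finset.univ \ {x, y} : Finset V).card = 3 := by
      rw [Finset.card_sdiff_of_subset (Finset.subset_univ _), Finset.card_univ, h5,
        Finset.card_pair hxy]
    obtain ⟨a, b, c, hab, hac, hbc, hs⟩ := Finset.card_eq_three.1 hcard
    have hm : ∀ w, w = x ∨ w = y ∨ w = a ∨ w = b ∨ w = c := by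
      intro w
      by_cases h1 : w = x
      · exact Or.inl h1
      by_cases h2 : w = y
      · exact Or.inr (Or.inl h2)
      have : w ∈ (Finset.univ \ {x, y} : Finset V) := by simp [h1, h2]
      rw [hs] at this
      simp at this
      tauto
    have hN : ∀ w, G.Adj x w → w = a ∨ w = b ∨ w = c := by
      intro w hw
      rcases hm w with h1 | h1 | h1
      · exact absurd h1.symm hw.ne
      · exact absurd (h1 ▸ hw) hna
      · exact h1
    have n1 : ¬ G.Adj a b := fun hh =>
      no_tri h x c a b (fun w hw => by have := hN w hw; tauto) (Or.inr hh)
    have n2 : ¬ G.Adj a c := fun hh =>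
      no_tri h x b a c (fun w hw => by have := hN w hw; tauto) (Or.inr hh)
    refine deg_three h.1 a x y ?_
    intro w hw
    rcases hm w with h1 | h1 | h1 | h1 | h1
    · exact Or.inl h1
    · exact Or.inr h1
    · exact absurd h1.symm hw.ne
    · exact absurd (h1 ▸ hw) n1
    · exact absurd (h1 ▸ hw) n2
  have hS : ∀ i j : Fin 5, i ≠ j → (squareCycle 5).Adj i j := by
    intro i j hij
    simp only [squareCycle, SimpleGraph.fromRel_adj]
    revert i j
    decide
  refine ⟨⟨Fintype.equivFinOfCardEq h5, ?_⟩⟩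
  intro a b
  constructor
  · intro hh
    exact hG a b (fun e => hh.ne (by rw [e]))
  · intro hh
    exact hS _ _ (fun e => hh.ne ((Fintype.equivFinOfCardEq h5).injective e))

/-! ### Periodic models of minors of Möbius ladders -/

/-- `f` is a model of `G` in the Möbius ladder with `m` rungs (unrolled to `ℤ`), where only
the rungs `i, i + m` with `R i` may be used. -/
structure Mdl (G : SimpleGraph V) (m : ℤ) (R : ℤ → Prop) (f : ℤ → V) : Prop where
  per : ∀ i, f (i + 2 * m) = f i
  surj : ∀ v, ∃ i, f i = v
  adj : ∀ u w, G.Adj u w → ∃ i, (f i = u ∧ f (i + 1) = w) ∨ (f i = w ∧ f (i + 1) = u) ∨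
    (R i ∧ f i = u ∧ f (i + m) = w)
  conn : ∀ P : ℤ → Prop, (∀ i, P (i + 2 * m) ↔ P i) →
    (∀ i, f i = f (i + 1) → (P i ↔ P (i + 1))) →
    (∀ i, R i → f i = f (i + m) → (P i ↔ P (i + m))) →
    ∀ i j, f i = f j → (P i ↔ P j)

lemma per_dvd {α : Type*} {f : ℤ → α} {M : ℤ} (h : ∀ i, f (i + M) = f i) {x y : ℤ}
    (hd : M ∣ x - y) : f x = f y := by
  have hp : Function.Periodic f M := h
  obtain ⟨k, hk⟩ := hd
  have := hp.int_mul k y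
  rw [← this]
  congr 1
  rw [mul_comm] at hk
  simp only [Int.cast_id]
  omega

lemma Mdl.eq_of_dvd {m : ℤ} {R : ℤ → Prop} {f : ℤ → V} (h : Mdl G m R f) {x y : ℤ}
    (hd : 2 * m ∣ x - y) : f x = f y := per_dvd h.per hd

lemma Mdl.rotate {m : ℤ} {R : ℤ → Prop} {f : ℤ → V} (h : Mdl G m R f) (k : ℤ) :
    Mdl G m (fun i => R (i + k)) (fun i => f (i + k)) where
  per i := by
    rw [← h.per (i + k)]; congr 1; ring
  surj v := by
    obtain ⟨i, hi⟩ := h.surj v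
    exact ⟨i - k, by simpa using hi⟩
  adj u w huw := by
    obtain ⟨i, hi⟩ := h.adj u w huw
    refine ⟨i - k, ?_⟩
    have e1 : i - k + k = i := by ring
    have e2 : i - k + 1 + k = i + 1 := by ring
    have e3 : i - k + m + k = i + m := by ring
    simpa only [e1, e2, e3] using hi
  conn P hP hr hg i j hij := by
    have := h.conn (fun i => P (i - k)) ?_ ?_ ?_ (i + k) (j + k) hij
    · simpa using this
    · intro i
      have := hP (i - k)
      rwa [show i - k + 2 * m = i + 2 * m - k by ring] at this
    · intro i hi
      have e2 : i - k + 1 + k = i + 1 := by ring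
      have := hr (i - k) (by rw [e2]; simpa using hi)
      rwa [show i - k + 1 = i + 1 - k by ring] at this
    · intro i hR hi
      have e2 : i - k + m + k = i + m := by ring
      have := hg (i - k) (by simpa using hR) (by rw [e2]; simpa using hi)
      rwa [show i - k + m = i + m - k by ring] at this

/-- A position alone in its branch set has few neighbours. -/
lemma Mdl.single {m : ℤ} {R : ℤ → Prop} {f : ℤ → V} (h : Mdl G m R f) (k : ℤ)
    (h1 : f k ≠ f (k + 1)) (h2 : f k ≠ f (k - 1))
    (h3 : ∀ i, R i → (2 * m ∣ i - k ∨ 2 * m ∣ i + m - k) → f i ≠ f (i + m)) :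
    ∀ i, f i = f k → 2 * m ∣ i - k := by
  intro i hi
  have := h.conn (fun i => 2 * m ∣ i - k) ?_ ?_ ?_ i k hi
  · exact this.2 (by simp)
  · intro i
    rw [show i + 2 * m - k = (i - k) + 2 * m by ring]
    exact dvd_add_self_right
  · intro i hi
    constructor
    · intro hd
      exfalso; apply h1
      rw [← h.eq_of_dvd hd, hi]
      exact h.eq_of_dvd (by simpa using hd)
    · intro hd
      exfalso; apply h2
      rw [← h.eq_of_dvd hd, ← hi]
      exact h.eq_of_dvd (by rw [show i - (k - 1) = i + 1 - k by ring]; exact hd)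
  · intro i hR hi
    constructor
    · intro hd
      exact absurd hi (h3 i hR (Or.inl hd))
    · intro hd
      exact absurd hi (h3 i hR (Or.inr hd))

lemma Mdl.single_adj {m : ℤ} {R : ℤ → Prop} {f : ℤ → V} (h : Mdl G m R f) (k : ℤ)
    (hs : ∀ i, f i = f k → 2 * m ∣ i - k) (y : V) (hy : G.Adj (f k) y) :
    y = f (k + 1) ∨ y = f (k - 1) ∨
      (y = f (k + m) ∧ ∃ i, R i ∧ m ∣ i - k) := by
  have mm : m ∣ 2 * m := ⟨2, by ring⟩
  obtain ⟨i, ⟨h1, h2⟩ | ⟨h1, h2⟩ | ⟨hR, h1, h2⟩⟩ := h.adj _ _ hy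
  · left
    rw [← h2]
    exact h.eq_of_dvd (by simpa using hs i h1)
  · right; left
    rw [← h1]
    exact h.eq_of_dvd (by
      have := hs _ h2
      rwa [show i - (k - 1) = i + 1 - k by ring])
  · right; right
    have := hs _ h1
    refine ⟨?_, i, hR, mm.trans this⟩
    rw [← h2]
    exact h.eq_of_dvd (by simpa using this)

/-! ### Deleting a rung -/

lemma skip_facts (m : ℤ) (hm : 2 ≤ m) : ∃ φ ψ : ℤ → ℤ,
    (∀ i, φ (i + (m - 1)) = φ i + m) ∧ (∀ i, ψ (φ i) = i) ∧ (∀ i, ¬ m ∣ φ i) ∧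
    (∀ i, ¬ m ∣ i → φ (ψ i) = i) ∧ (∀ i, m ∣ i → ψ i = ψ (i - 1)) ∧
    (∀ i, ψ (i + m) = ψ i + (m - 1)) ∧ (∀ i, ¬ m ∣ i + 1 → ψ (i + 1) = ψ i + 1) := by
  have d1 : ∀ q s : ℤ, 0 ≤ s → s < m - 1 → (q * (m - 1) + s) / (m - 1) = q := by
    intro q s h1 h2
    rw [Int.add_comm, Int.add_mul_ediv_right _ _ (by omega), Int.ediv_eq_zero_of_lt h1 h2]; ring
  have d2 : ∀ q s : ℤ, 0 ≤ s → s < m → (q * m + s) / m = q := by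
    intro q s h1 h2
    rw [Int.add_comm, Int.add_mul_ediv_right _ _ (by omega), Int.ediv_eq_zero_of_lt h1 h2]; ring
  have e1 : ∀ i : ℤ, ∃ q s : ℤ, 0 ≤ s ∧ s < m - 1 ∧ i = q * (m - 1) + s := fun i =>
    ⟨i / (m - 1), i % (m - 1), Int.emod_nonneg _ (by omega), Int.emod_lt_of_pos _ (by omega),
      by rw [mul_comm]; exact (Int.mul_ediv_add_emod _ _).symm⟩
  have e2 : ∀ i : ℤ, ∃ q s : ℤ, 0 ≤ s ∧ s < m ∧ i = q * m + s := fun i =>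
    ⟨i / m, i % m, Int.emod_nonneg _ (by omega), Int.emod_lt_of_pos _ (by omega),
      by rw [mul_comm]; exact (Int.mul_ediv_add_emod _ _).symm⟩
  have nd : ∀ q s : ℤ, 0 ≤ s → s < m → (m ∣ q * m + s ↔ s = 0) := by
    intro q s h1 h2
    rw [Int.dvd_add_right (Dvd.intro_left q rfl)]
    constructor
    · intro h
      exact Int.eq_zero_of_dvd_of_nonneg_of_lt h1 h2 h
    · rintro rfl; simp
  have p1 : ∀ q s : ℤ, 0 ≤ s → s < m - 1 →
      (q * (m - 1) + s) + (q * (m - 1) + s) / (m - 1) + 1 = q * m + (s + 1) := by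
    intro q s h1 h2
    rw [d1 q s h1 h2]; ring
  have p2 : ∀ q s : ℤ, 0 ≤ s → s < m →
      (q * m + s) - 1 - (q * m + s) / m = q * (m - 1) + (s - 1) := by
    intro q s h1 h2
    rw [d2 q s h1 h2]; ring
  refine ⟨fun i => i + i / (m - 1) + 1, fun i => i - 1 - i / m, ?_, ?_, ?_, ?_, ?_, ?_, ?_⟩
  · intro i
    obtain ⟨q, s, h1, h2, rfl⟩ := e1 i
    have : q * (m - 1) + s + (m - 1) = (q + 1) * (m - 1) + s := by ring
    simp only
    rw [this, p1 _ _ h1 h2, p1 _ _ h1 h2]; ring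
  · intro i
    obtain ⟨q, s, h1, h2, rfl⟩ := e1 i
    simp only
    rw [p1 _ _ h1 h2, p2 _ _ (by omega) (by omega)]; ring
  · intro i
    obtain ⟨q, s, h1, h2, rfl⟩ := e1 i
    simp only
    rw [p1 _ _ h1 h2, nd _ _ (by omega) (by omega)]; omega
  · intro i hi
    obtain ⟨q, s, h1, h2, rfl⟩ := e2 i
    rw [nd _ _ h1 h2] at hi
    simp only
    rw [p2 _ _ h1 h2, p1 _ _ (by omega) (by omega)]; ring
  · intro i hi
    obtain ⟨q, s, h1, h2, rfl⟩ := e2 i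
    rw [nd _ _ h1 h2] at hi
    subst hi
    have : q * m + 0 - 1 = (q - 1) * m + (m - 1) := by ring
    simp only
    rw [p2 _ _ h1 h2, this, p2 _ _ (by omega) (by omega)]; ring
  · intro i
    obtain ⟨q, s, h1, h2, rfl⟩ := e2 i
    have : q * m + s + m = (q + 1) * m + s := by ring
    simp only
    rw [this, p2 _ _ h1 h2, p2 _ _ h1 h2]; ring
  · intro i hi
    obtain ⟨q, s, h1, h2, rfl⟩ := e2 i
    by_cases hs : s = m - 1
    · exfalso; apply hi
      subst hs
      exact ⟨q + 1, by ring⟩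
    · simp only
      rw [show q * m + s + 1 = q * m + (s + 1) by ring, p2 _ _ h1 h2,
        p2 _ _ (by omega) (by omega)]; ring

lemma Mdl.reduce (h4 : InternallyFourConnected G) {m : ℤ} (hm : 2 ≤ m) {f : ℤ → V}
    (h : Mdl G m (fun i => ¬ m ∣ i) f) : ∃ f', Mdl G (m - 1) (fun _ => True) f' := by
  classical
  obtain ⟨φ, ψ, φm, ψφ, φn, φψ, ψ0, ψm, ψ1⟩ := skip_facts m hm
  have ndm : ∀ i, m ∣ i → ¬ m ∣ i + 1 := by
    intro i hi h1
    have := (Int.dvd_add_right hi).1 h1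
    have := Int.le_of_dvd one_pos this
    omega
  have ndm' : ∀ i, m ∣ i → ¬ m ∣ i - 1 := by
    intro i hi h1
    exact ndm _ h1 (by simpa using hi)
  have mm : m ∣ 2 * m := ⟨2, by ring⟩
  have hk : ∀ k, m ∣ k → f k = f (k - 1) ∨ f k = f (k + 1) := by
    intro k hk
    by_contra hcon
    push Not at hcon
    have hs := h.single k hcon.2 hcon.1 (by
      intro i hR hd
      exfalso; apply hR
      rcases hd with hd | hd
      · have := (Int.dvd_add_right hk).2 (mm.trans hd)
        simpa using this
      · have := (Int.dvd_add_right hk).2 (mm.trans hd)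
        have h2 := Int.dvd_sub this (dvd_refl m)
        simpa using h2)
    refine deg_three h4.1 (f k) (f (k + 1)) (f (k - 1)) ?_
    intro y hy
    rcases h.single_adj k hs y hy with h1 | h1 | ⟨_, i, hR, hd⟩
    · exact Or.inl h1
    · exact Or.inr h1
    · exfalso; apply hR
      simpa using (Int.dvd_add_right hk).2 hd
  refine ⟨fun i => f (φ i), ?_, ?_, ?_, ?_⟩
  · intro i
    rw [show i + 2 * (m - 1) = i + (m - 1) + (m - 1) by ring, φm, φm, add_assoc, ← two_mul]
    exact h.per _
  · intro v
    obtain ⟨i, hi⟩ := h.surj v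
    by_cases hd : m ∣ i
    · rcases hk i hd with h1 | h1
      · exact ⟨ψ (i - 1), by rw [φψ _ (ndm' i hd), ← h1, hi]⟩
      · exact ⟨ψ (i + 1), by rw [φψ _ (ndm i hd), ← h1, hi]⟩
    · exact ⟨ψ i, by rw [φψ _ hd, hi]⟩
  · -- adjacency
    have rail : ∀ u w i, u ≠ w → f i = u → f (i + 1) = w →
        ∃ j, f (φ j) = u ∧ f (φ (j + 1)) = w := by
      intro u w i huw hu hw
      by_cases hd : m ∣ i
      · rcases hk i hd with h1 | h1
        · refine ⟨ψ (i - 1), ?_, ?_⟩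
          · rw [φψ _ (ndm' i hd), ← h1, hu]
          · rw [← ψ0 i hd, ← ψ1 i (ndm i hd), φψ _ (ndm i hd), hw]
        · exact absurd (by rw [← hu, h1, hw]) huw
      · by_cases hd' : m ∣ i + 1
        · rcases hk (i + 1) hd' with h1 | h1
          · exfalso; apply huw
            rw [← hw, h1, ← hu]; simp
          · have hn := ndm _ hd'
            refine ⟨ψ i, by rw [φψ _ hd, hu], ?_⟩
            have := ψ0 _ hd'
            rw [show i + 1 - 1 = i by ring] at this
            rw [← this, ← ψ1 _ hn, φψ _ hn, ← h1, hw]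
        · exact ⟨ψ i, by rw [φψ _ hd, hu], by rw [← ψ1 _ hd', φψ _ hd', hw]⟩
    intro u w huw
    obtain ⟨i, ⟨h1, h2⟩ | ⟨h1, h2⟩ | ⟨hR, h1, h2⟩⟩ := h.adj _ _ huw
    · obtain ⟨j, hj⟩ := rail u w i huw.ne h1 h2
      exact ⟨j, Or.inl hj⟩
    · obtain ⟨j, hj⟩ := rail w u i huw.ne.symm h1 h2
      exact ⟨j, Or.inr (Or.inl hj)⟩
    · refine ⟨ψ i, Or.inr (Or.inr ⟨trivial, ?_, ?_⟩)⟩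
      · rw [φψ _ hR, h1]
      · rw [φm, φψ _ hR, h2]
  · intro P hP hr hg i j hij
    let σ : ℤ → ℤ := fun i => if m ∣ i ∧ f i ≠ f (i - 1) then i + 1 else i
    have σn : ∀ i, ¬ m ∣ i → σ i = i := fun i hi => if_neg (fun h => hi h.1)
    have key := h.conn (fun i => P (ψ (σ i))) ?_ ?_ ?_ (φ i) (φ j) hij
    · beta_reduce at key
      rwa [σn _ (φn i), σn _ (φn j), ψφ, ψφ] at key
    · intro i
      have hσ : σ (i + 2 * m) = σ i + m + m := by
        have e1 : m ∣ i + 2 * m ↔ m ∣ i := by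
          rw [Int.dvd_add_left mm]
        have e2 : f (i + 2 * m - 1) = f (i - 1) := by
          rw [← h.per (i - 1)]; congr 1; ring
        simp only [σ, e1, e2, h.per]
        split_ifs <;> ring
      rw [hσ, ψm, ψm, add_assoc, ← two_mul]
      exact hP _
    · intro i hi
      by_cases hd : m ∣ i
      · have hn := ndm i hd
        rw [σn _ hn]
        by_cases h1 : f i = f (i - 1)
        · have : σ i = i := if_neg (fun h => h.2 h1)
          rw [this, ψ1 _ hn]
          apply hr
          rw [← ψ1 _ hn, φψ _ hn, ψ0 _ hd, φψ _ (ndm' i hd), ← h1, hi]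
        · have : σ i = i + 1 := if_pos ⟨hd, h1⟩
          rw [this]
      · rw [σn _ hd]
        by_cases hd' : m ∣ i + 1
        · have : σ (i + 1) = i + 1 := if_neg (fun h => h.2 (by rw [← hi]; simp))
          rw [this, ψ0 _ hd']; simp
        · rw [σn _ hd', ψ1 _ hd']
          apply hr
          rw [← ψ1 _ hd', φψ _ hd', φψ _ hd, hi]
    · intro i hR hi
      have hn : ¬ m ∣ i + m := fun h => hR (by simpa using h)
      rw [σn _ hR, σn _ hn, ψm]
      apply hg _ trivial
      rw [φm, φψ _ hR, hi]

lemma dvd_two_cases {m x : ℤ} (h : m ∣ x) : 2 * m ∣ x ∨ 2 * m ∣ x - m := by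
  obtain ⟨q, rfl⟩ := h
  rcases Int.even_or_odd' q with ⟨r, rfl | rfl⟩
  · left; exact ⟨r, by ring⟩
  · right; exact ⟨r, by ring⟩

lemma Mdl.undeletable (h4 : InternallyFourConnected G) {m : ℤ} (hm : 2 ≤ m) {f : ℤ → V}
    (h : Mdl G m (fun _ => True) f) (hmin : ¬ ∃ f', Mdl G (m - 1) (fun _ => True) f')
    (k : ℤ) (hk : f k ≠ f (k + m)) :
    G.Adj (f k) (f (k + m)) ∧ ∀ j, ¬ m ∣ j - k → ¬ (f j = f k ∧ f (j + m) = f (k + m)) := by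
  have hno : ¬ Mdl G m (fun i => ¬ m ∣ i - k) f := by
    intro hh
    have := hh.rotate k
    simp only [add_sub_cancel_right] at this
    exact hmin (this.reduce h4 hm)
  have hpp : ∀ i, f (i + m + m) = f i := fun i => by
    rw [add_assoc, ← two_mul]; exact h.per i
  have hpair : ∀ i, m ∣ i - k → (f i = f k ∧ f (i + m) = f (k + m)) ∨
      (f i = f (k + m) ∧ f (i + m) = f k) := by
    intro i hi
    rcases dvd_two_cases hi with hd | hd
    · left; exact ⟨h.eq_of_dvd hd, h.eq_of_dvd (by simpa using hd)⟩
    · right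
      refine ⟨h.eq_of_dvd (by rwa [← sub_sub]), ?_⟩
      rw [← hpp k]
      exact h.eq_of_dvd (by rwa [show i + m - (k + m + m) = i - k - m by ring])
  by_contra hcon
  apply hno
  refine ⟨h.per, h.surj, ?_, ?_⟩
  · intro u w huw
    obtain ⟨i, h1 | h1 | ⟨-, h1, h2⟩⟩ := h.adj _ _ huw
    · exact ⟨i, Or.inl h1⟩
    · exact ⟨i, Or.inr (Or.inl h1)⟩
    by_cases hd : m ∣ i - k
    · have hadj : G.Adj (f k) (f (k + m)) := by
        rcases hpair i hd with ⟨h3, h5⟩ | ⟨h3, h5⟩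
        · rw [← h3, ← h5, h1, h2]; exact huw
        · rw [← h3, ← h5, h1, h2]; exact huw.symm
      have : ∃ j, ¬ m ∣ j - k ∧ (f j = f k ∧ f (j + m) = f (k + m)) := by
        by_contra hx
        apply hcon
        refine ⟨hadj, fun j hj hj' => hx ⟨j, hj, hj'⟩⟩
      obtain ⟨j, hj, hj1, hj2⟩ := this
      rcases hpair i hd with ⟨h3, h5⟩ | ⟨h3, h5⟩
      · exact ⟨j, Or.inr (Or.inr ⟨hj, by rw [hj1, ← h3, h1], by rw [hj2, ← h5, h2]⟩)⟩
      · refine ⟨j + m, Or.inr (Or.inr ⟨?_, by rw [hj2, ← h3, h1], by rw [hpp, hj1, ← h5, h2]⟩)⟩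
        rw [show j + m - k = j - k + m by ring]
        simpa using hj
    · exact ⟨i, Or.inr (Or.inr ⟨hd, h1, h2⟩)⟩
  · intro P hP hr hg
    refine h.conn P hP hr ?_
    intro i _ hi
    by_cases hd : m ∣ i - k
    · exfalso
      rcases hpair i hd with ⟨h3, h5⟩ | ⟨h3, h5⟩
      · exact hk (by rw [← h3, ← h5, hi])
      · exact hk (by rw [← h3, ← h5, hi])
    · exact hg i hd hi

/-! ### A rung inside a branch set: the graph is small -/

lemma Mdl.small (h4 : InternallyFourConnected G) {m : ℤ} (hm : 2 ≤ m) {f : ℤ → V}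
    (h : Mdl G m (fun _ => True) f) (h0 : f 0 = f m)
    (hr : ∀ j, f j = f (j + m) ∨ G.Adj (f j) (f (j + m))) : Fintype.card V ≤ 5 := by
  classical
  have hpp : ∀ i, f (i + m + m) = f i := fun i => by
    rw [add_assoc, ← two_mul]; exact h.per i
  have hred : ∀ i k, m ∣ i - k → (f i = f k ∧ f (i + 1) = f (k + 1) ∧ f (i + m) = f (k + m)) ∨
      (f i = f (k + m) ∧ f (i + 1) = f (k + 1 + m) ∧ f (i + m) = f k) := by
    intro i k hi
    rcases dvd_two_cases hi with hd | hd
    · left; exact ⟨h.eq_of_dvd hd, h.eq_of_dvd (by simpa using hd), h.eq_of_dvd (by simpa using hd)⟩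
    · right
      refine ⟨h.eq_of_dvd (by rwa [← sub_sub]),
        h.eq_of_dvd (by rwa [show i + 1 - (k + 1 + m) = i - k - m by ring]), ?_⟩
      rw [← hpp k]
      exact h.eq_of_dvd (by rwa [show i + m - (k + m + m) = i - k - m by ring])
  have hk : ∀ i : ℤ, 0 ≤ i % m ∧ i % m < m ∧ m ∣ i - i % m := fun i =>
    ⟨Int.emod_nonneg _ (by omega), Int.emod_lt_of_pos _ (by omega), Int.dvd_self_sub_emod⟩
  have h2m : f (m + m) = f 0 := by have := hpp 0; simpa using this
  let L : ℤ → Set V := fun j => {v | ∃ k, 0 ≤ k ∧ k ≤ j ∧ (f k = v ∨ f (k + m) = v)}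
  let R : ℤ → Set V := fun j => {v | ∃ k, j ≤ k ∧ k ≤ m ∧ (f k = v ∨ f (k + m) = v)}
  have hcov : ∀ v, ∃ k, 0 ≤ k ∧ k < m ∧ (f k = v ∨ f (k + m) = v) := by
    intro v
    obtain ⟨i, rfl⟩ := h.surj v
    obtain ⟨a, b, c⟩ := hk i
    refine ⟨i % m, a, b, ?_⟩
    rcases hred i _ c with h1 | h1
    · exact Or.inl h1.1.symm
    · exact Or.inr h1.1.symm
  have hcap : ∀ j, 0 < j → j < m → L j ∩ R j ⊆ {f 0, f j, f (j + m)} := by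
    rintro j hj0 hjm v ⟨⟨k, hk0, hkj, hkv⟩, ⟨l, hlj, hlm, hlv⟩⟩
    by_contra hv
    simp only [Set.mem_insert_iff, Set.mem_singleton_iff, not_or] at hv
    obtain ⟨v0, vj, vjm⟩ := hv
    have hkne : k ≠ j := by
      rintro rfl
      rcases hkv with h1 | h1
      · exact vj h1.symm
      · exact vjm h1.symm
    have hlne : l ≠ m := by
      rintro rfl
      rcases hlv with h1 | h1
      · exact v0 (by rw [h0, h1])
      · exact v0 (by rw [← h2m, h1])
    obtain ⟨k', hk'v, hk'm⟩ : ∃ k', f k' = v ∧ k' % m = k := by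
      have e : k % m = k := Int.emod_eq_of_lt hk0 (by omega)
      rcases hkv with h1 | h1
      · exact ⟨k, h1, e⟩
      · exact ⟨k + m, h1, by simpa using e⟩
    obtain ⟨l', hl'v, hl'm⟩ : ∃ l', f l' = v ∧ l' % m = l := by
      have e : l % m = l := Int.emod_eq_of_lt (by omega) (by omega)
      rcases hlv with h1 | h1
      · exact ⟨l, h1, e⟩
      · exact ⟨l + m, h1, by simpa using e⟩
    have hnj : ∀ i, f i = v → i % m ≠ j := by
      intro i hi hij
      have hd : m ∣ i - j := by rw [← hij]; exact Int.dvd_self_sub_emod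
      rcases hred i j hd with h1 | h1
      · exact vj (by rw [← hi, h1.1])
      · exact vjm (by rw [← hi, h1.1])
    have hn0 : ∀ i, f i = v → i % m ≠ 0 := by
      intro i hi hij
      have hd : m ∣ i - 0 := by rw [sub_zero]; exact Int.dvd_of_emod_eq_zero hij
      rcases hred i 0 hd with h1 | h1
      · exact v0 (by rw [← hi, h1.1])
      · exact v0 (by rw [← hi, h1.1, zero_add, h0])
    have hstep : ∀ i, (i + 1) % m = i % m + 1 ∨ (i + 1) % m = 0 := by
      intro i
      obtain ⟨a, b, c⟩ := hk i
      obtain ⟨q, hq⟩ := c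
      have e : i + 1 = (i % m + 1) + m * q := by omega
      rcases lt_or_ge (i % m + 1) m with h1 | h1
      · left
        conv_lhs => rw [e]
        rw [Int.add_mul_emod_self_left, Int.emod_eq_of_lt (by omega) h1]
      · right
        have : i % m + 1 = m := by omega
        conv_lhs => rw [e, this]
        simp
    have := h.conn (fun i => f i = v ∧ i % m < j) ?_ ?_ ?_ k' l' (by rw [hk'v, hl'v])
    · have h1 := this.1 ⟨hk'v, by omega⟩
      omega
    · intro i
      simp only [h.per]
      rw [show i + 2 * m = i + m * 2 by ring, Int.add_mul_emod_self_left]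
    · intro i hi
      simp only [← hi]
      constructor
      · rintro ⟨h1, h2⟩
        refine ⟨h1, ?_⟩
        have a := hnj (i + 1) (by rw [← hi, h1])
        have b := hn0 (i + 1) (by rw [← hi, h1])
        rcases hstep i with h3 | h3 <;> omega
      · rintro ⟨h1, h2⟩
        refine ⟨h1, ?_⟩
        have b := hn0 (i + 1) (by rw [← hi, h1])
        rcases hstep i with h3 | h3 <;> omega
    · intro i _ hi
      simp only [← hi]
      rw [Int.add_emod_right]
  have hLR : ∀ j, 0 < j → j < m → L j = Set.univ ∨ R j = Set.univ := by
    intro j hj0 hjm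
    refine sep h4 (L j) (R j) ?_ ?_ (f 0) (f j) (f (j + m)) (hcap j hj0 hjm) (hr j)
    · apply Set.eq_univ_of_forall
      intro v
      obtain ⟨k, a, b, c⟩ := hcov v
      rcases le_total k j with h1 | h1
      · left; exact ⟨k, a, h1, c⟩
      · right; exact ⟨k, h1, by omega, c⟩
    · have main : ∀ u w i, ((f i = u ∧ f (i + 1) = w) ∨ (f i = u ∧ f (i + m) = w)) →
          (u ∈ L j ∧ w ∈ L j) ∨ (u ∈ R j ∧ w ∈ R j) := by
        intro u w i hi
        obtain ⟨a, b, c⟩ := hk i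
        have hc := hred i _ c
        have hu : f (i % m) = u ∨ f (i % m + m) = u := by
          rcases hi with ⟨h1, _⟩ | ⟨h1, _⟩ <;> rcases hc with h3 | h3
          · left; rw [← h1, h3.1]
          · right; rw [← h1, h3.1]
          · left; rw [← h1, h3.1]
          · right; rw [← h1, h3.1]
        have hw : (f (i % m + 1) = w ∨ f (i % m + 1 + m) = w) ∨
            (f (i % m) = w ∨ f (i % m + m) = w) := by
          rcases hi with ⟨_, h1⟩ | ⟨_, h1⟩ <;> rcases hc with h3 | h3
          · left; left; rw [← h1, h3.2.1]
          · left; right; rw [← h1, h3.2.1]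
          · right; right; rw [← h1, h3.2.2]
          · right; left; rw [← h1, h3.2.2]
        rcases lt_or_ge (i % m) j with hlt | hge
        · left
          refine ⟨⟨_, a, by omega, hu⟩, ?_⟩
          rcases hw with hw | hw
          · exact ⟨_, by omega, by omega, hw⟩
          · exact ⟨_, by omega, by omega, hw⟩
        · right
          refine ⟨⟨_, hge, by omega, hu⟩, ?_⟩
          rcases hw with hw | hw
          · exact ⟨_, by omega, by omega, hw⟩
          · exact ⟨_, by omega, by omega, hw⟩
      intro u w huw
      obtain ⟨i, h1 | h1 | ⟨-, h1⟩⟩ := h.adj _ _ huw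
      · exact main u w i (Or.inl h1)
      · have := main w u i (Or.inl h1)
        tauto
      · exact main u w i (Or.inr h1)
  have hL : L (m) = Set.univ := by
    apply Set.eq_univ_of_forall
    intro v
    obtain ⟨k, a, b, c⟩ := hcov v
    exact ⟨k, a, by omega, c⟩
  have hR : R 0 = Set.univ := by
    apply Set.eq_univ_of_forall
    intro v
    obtain ⟨k, a, b, c⟩ := hcov v
    exact ⟨k, a, by omega, c⟩
  -- find the transition
  have htrans : ∃ j, 0 ≤ j ∧ j < m ∧ R j = Set.univ ∧ L (j + 1) = Set.univ := by
    by_contra hcon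
    have hall : ∀ n : ℕ, (n : ℤ) < m → R n = Set.univ := by
      intro n
      induction n with
      | zero => intro _; simpa using hR
      | succ n ih =>
        intro hn
        push_cast at hn ⊢
        have h1 := ih (by omega)
        rcases hLR (n + 1) (by omega) hn with h2 | h2
        · exact absurd ⟨(n : ℤ), by omega, by omega, h1, h2⟩ hcon
        · exact h2
    have := hall (m - 1).toNat (by omega)
    rw [show (((m - 1).toNat : ℕ) : ℤ) = m - 1 by omega] at this
    exact hcon ⟨m - 1, by omega, by omega, this, by simpa using hL⟩
  obtain ⟨j, hj0, hjm, hRj, hLj⟩ := htrans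
  have hfin : (Finset.univ : Finset V) ⊆ {f 0, f j, f (j + m), f (j + 1), f (j + 1 + m)} := by
    intro v _
    have hv : v ∈ L (j + 1) := by rw [hLj]; trivial
    have hv2 : v ∈ R j := by rw [hRj]; trivial
    obtain ⟨k, hk0, hk1, hkv⟩ := hv
    simp only [Finset.mem_insert, Finset.mem_singleton]
    by_cases hkj : k = j + 1
    · subst hkj
      rcases hkv with h1 | h1 <;> simp [h1]
    · by_cases hj : j = 0
      · have : k = j := by omega
        subst this
        rcases hkv with h1 | h1 <;> simp [h1]
      · have := hcap j (by omega) hjm ⟨⟨k, hk0, by omega, hkv⟩, hv2⟩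
        simp only [Set.mem_insert_iff, Set.mem_singleton_iff] at this
        tauto
  have h1 := Finset.card_le_card hfin
  have h2 := Finset.card_le_five (a := f 0) (b := f j) (c := f (j + m)) (d := f (j + 1))
    (e := f (j + 1 + m))
  simp only [Finset.card_univ] at h1
  omega

/-! ### No rung inside a branch set -/

lemma mod_iff {n a c : ℕ} (ha : a < n) : a = c % n ↔ (n : ℤ) ∣ (a : ℤ) - c := by
  rw [← Nat.modEq_iff_dvd, Nat.ModEq, Nat.mod_eq_of_lt ha]
  exact eq_comm

/-- All positions are in distinct branch sets: `G` is the Möbius ladder. -/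
lemma Mdl.iso_ladder (h4 : InternallyFourConnected G) {m : ℕ} {f : ℤ → V}
    (h : Mdl G m (fun _ => True) f) (hm : 3 ≤ m)
    (hrung : ∀ i, G.Adj (f i) (f (i + m)))
    (hE : ∀ i, f i ≠ f (i + 1)) : Nonempty (G ≃g mobiusLadder m) := by
  have hs : ∀ k i, f i = f k → 2 * (m : ℤ) ∣ i - k := by
    intro k
    apply h.single k (hE k)
    · have := hE (k - 1)
      simp only [sub_add_cancel] at this
      exact this.symm
    · intro i _ _
      exact (hrung i).ne
  have hN : ∀ k y, G.Adj (f k) y → y = f (k + 1) ∨ y = f (k - 1) ∨ y = f (k + m) := by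
    intro k y hy
    rcases h.single_adj k (hs k) y hy with h1 | h1 | h1
    · exact Or.inl h1
    · exact Or.inr (Or.inl h1)
    · exact Or.inr (Or.inr h1.1)
  have hrail : ∀ k, G.Adj (f k) (f (k + 1)) := by
    intro k
    by_contra hna
    refine deg_three h4.1 (f k) (f (k - 1)) (f (k + m)) ?_
    intro y hy
    rcases hN k y hy with h1 | h1
    · exact absurd (h1 ▸ hy) hna
    · exact h1
  have hmod : ∀ (a : Fin (2 * m)) (c : ℕ), a.val = c % (2 * m) ↔ f a.val = f c := by
    intro a c
    rw [mod_iff a.2]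
    push_cast
    exact ⟨fun hd => h.eq_of_dvd hd, fun he => hs _ _ he⟩
  have hb : Function.Bijective (fun a : Fin (2 * m) => f a.val) := by
    constructor
    · intro a b hab
      have := (hmod a b.val).2 hab
      rw [Nat.mod_eq_of_lt b.2] at this
      exact Fin.ext this
    · intro v
      obtain ⟨i, rfl⟩ := h.surj v
      have hpos : (0 : ℤ) < 2 * m := by omega
      have h0 := Int.emod_nonneg i hpos.ne'
      have h1 := Int.emod_lt_of_pos i hpos
      refine ⟨⟨(i % (2 * m)).toNat, by omega⟩, ?_⟩
      simp only
      rw [Int.toNat_of_nonneg h0]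
      exact (h.eq_of_dvd Int.dvd_self_sub_emod).symm
  refine ⟨RelIso.symm ⟨Equiv.ofBijective _ hb, ?_⟩⟩
  intro a b
  simp only [Equiv.ofBijective_apply, mobiusLadder, SimpleGraph.fromRel_adj, hmod]
  push_cast
  constructor
  · intro hadj
    refine ⟨fun hab => hadj.ne (by rw [hab]), ?_⟩
    rcases hN _ _ hadj with h1 | h1 | h1
    · exact Or.inl (Or.inl h1)
    · right; left
      apply h.eq_of_dvd
      have := hs _ _ h1
      rw [← dvd_neg]
      rwa [show -((a.val : ℤ) - (b.val + 1)) = b.val - (a.val - 1) by ring]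
    · exact Or.inl (Or.inr h1)
  · rintro ⟨_, (h1 | h1) | (h1 | h1)⟩
    · rw [h1]; exact hrail _
    · rw [h1]; exact hrung _
    · rw [h1]; exact (hrail _).symm
    · rw [h1]; exact (hrung _).symm

/-- All branch sets are pairs `2t, 2t+1`: `G` is the square of an odd cycle. -/
lemma Mdl.iso_square (h4 : InternallyFourConnected G) {m : ℕ} {f : ℤ → V}
    (h : Mdl G m (fun _ => True) f) (hm : 3 ≤ m) (c : ℤ) (hc : (m : ℤ) = 2 * c - 1)
    (hrung : ∀ i, G.Adj (f i) (f (i + m)))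
    (hE : ∀ t, f (2 * t) = f (2 * t + 1)) (hO : ∀ t, f (2 * t + 1) ≠ f (2 * t + 1 + 1)) :
    Nonempty (G ≃g squareCycle m) := by
  have hfib : ∀ i j, f i = f j → (m : ℤ) ∣ i / 2 - j / 2 := by
    intro i j hij
    have := h.conn (fun i => (m : ℤ) ∣ i / 2 - j / 2) ?_ ?_ ?_ i j hij
    · exact this.2 (by simp)
    · intro i
      rw [show (i + 2 * (m : ℤ)) / 2 - j / 2 = (i / 2 - j / 2) + m by omega]
      exact dvd_add_self_right
    · intro i hi
      rcases Int.even_or_odd' i with ⟨t, rfl | rfl⟩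
      · rw [show (2 * t + 1) / 2 = 2 * t / 2 by omega]
      · exact absurd hi (hO t)
    · intro i _ hi
      exact absurd hi (hrung i).ne
  have hg : ∀ t s, f (2 * t) = f (2 * s) ↔ (m : ℤ) ∣ t - s := by
    intro t s
    constructor
    · intro he
      have := hfib _ _ he
      rwa [show 2 * t / 2 = t by omega, show 2 * s / 2 = s by omega] at this
    · rintro ⟨q, hq⟩
      apply h.eq_of_dvd
      exact ⟨q, by rw [← mul_sub, hq]; ring⟩
  have hhalf : ∀ i, f i = f (2 * (i / 2)) := by
    intro i
    rcases Int.even_or_odd' i with ⟨t, rfl | rfl⟩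
    · congr 1; omega
    · rw [← hE]; congr 1; omega
  have hrg : ∀ t, G.Adj (f (2 * t)) (f (2 * (t + c))) := by
    intro t
    have := hrung (2 * t + 1)
    rw [← hE, hc] at this
    rwa [show 2 * t + 1 + (2 * c - 1) = 2 * (t + c) by ring] at this
  have hrg' : ∀ t s, (m : ℤ) ∣ s - t - c → G.Adj (f (2 * t)) (f (2 * s)) := by
    intro t s hd
    rw [(hg s (t + c)).2 (by rwa [← sub_sub])]
    exact hrg t
  have hN : ∀ t s, G.Adj (f (2 * t)) (f (2 * s)) → (m : ℤ) ∣ s - t - 1 ∨ (m : ℤ) ∣ t - s - 1 ∨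
      (m : ℤ) ∣ s - t - c ∨ (m : ℤ) ∣ t - s - c := by
    have rail : ∀ t s i, G.Adj (f (2 * t)) (f (2 * s)) → f i = f (2 * t) → f (i + 1) = f (2 * s) →
        (m : ℤ) ∣ s - t - 1 := by
      intro t s i hadj h1 h2
      rcases Int.even_or_odd' i with ⟨a, rfl | rfl⟩
      · exact absurd (by rw [← h1, ← h2, hE]) hadj.ne
      · rw [← hE, hg] at h1
        rw [show 2 * a + 1 + 1 = 2 * (a + 1) by ring, hg] at h2
        have := dvd_sub h1 h2
        rwa [show a - t - (a + 1 - s) = s - t - 1 by ring] at this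
    intro t s hadj
    obtain ⟨i, ⟨h1, h2⟩ | ⟨h1, h2⟩ | ⟨-, h1, h2⟩⟩ := h.adj _ _ hadj
    · exact Or.inl (rail t s i hadj h1 h2)
    · exact Or.inr (Or.inl (rail s t i hadj.symm h1 h2))
    · right; right
      rcases Int.even_or_odd' i with ⟨a, rfl | rfl⟩
      · right
        rw [hc, show 2 * a + (2 * c - 1) = 2 * (a + c - 1) + 1 by ring, ← hE, hg] at h2
        rw [hg] at h1
        have := dvd_sub (dvd_sub h2 h1) (dvd_refl (m : ℤ))
        rwa [show a + c - 1 - s - (a - t) - (m : ℤ) = t - s - c by rw [hc]; ring] at this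
      · left
        rw [hc, show 2 * a + 1 + (2 * c - 1) = 2 * (a + c) by ring, hg] at h2
        rw [← hE, hg] at h1
        have := dvd_sub h1 h2
        rwa [show a - t - (a + c - s) = s - t - c by ring] at this
  have hrail : ∀ t, G.Adj (f (2 * t)) (f (2 * (t + 1))) := by
    intro t
    by_contra hna
    refine no_tri h4 (f (2 * t)) (f (2 * (t + c))) (f (2 * (t - 1))) (f (2 * (t - c))) ?_ ?_
    · intro y hy
      obtain ⟨i, rfl⟩ := h.surj y
      rw [hhalf i] at hy ⊢
      rcases hN _ _ hy with h1 | h1 | h1 | h1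
      · exfalso; apply hna
        rwa [(hg (t + 1) (i / 2)).2 (by
          rw [← dvd_neg]; rwa [show -(t + 1 - i / 2) = i / 2 - t - 1 by ring])]
      · right; left
        rw [hg, ← dvd_neg]; rwa [show -(i / 2 - (t - 1)) = t - i / 2 - 1 by ring]
      · left
        rw [hg]; rwa [← sub_sub]
      · right; right
        rw [hg, ← dvd_neg]; rwa [show -(i / 2 - (t - c)) = t - i / 2 - c by ring]
    · right
      apply hrg'
      rw [show t - c - (t - 1) - c = -(m : ℤ) by rw [hc]; ring]
      simp
  have hrail' : ∀ t s, (m : ℤ) ∣ s - t - 1 → G.Adj (f (2 * t)) (f (2 * s)) := by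
    intro t s hd
    rw [(hg s (t + 1)).2 (by rwa [← sub_sub])]
    exact hrail t
  -- multiplication by `c` modulo `m`
  have hmc : ∀ x : ℤ, (m : ℤ) ∣ x * c ↔ (m : ℤ) ∣ x := by
    intro x
    constructor
    · rintro ⟨q, hq⟩
      refine ⟨2 * q - x, ?_⟩
      have : x * m = 2 * (x * c) - x := by rw [hc]; ring
      rw [hq] at this
      linarith
    · intro hd
      exact Dvd.dvd.mul_right hd c
  have hm1 : ∀ x : ℤ, (m : ℤ) ∣ x * c - 1 ↔ (m : ℤ) ∣ x - 2 := by
    intro x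
    rw [← hmc (x - 2), show (x - 2) * c = x * c - 1 - m by rw [hc]; ring]
    exact (dvd_sub_self_right).symm
  have hm2 : ∀ x : ℤ, (m : ℤ) ∣ x * c - c ↔ (m : ℤ) ∣ x - 1 := by
    intro x
    rw [← hmc (x - 1), show (x - 1) * c = x * c - c by ring]
  have hb : Function.Bijective (fun a : Fin m => f (2 * ((a.val : ℤ) * c))) := by
    constructor
    · intro a b hab
      simp only [hg, ← sub_mul, hmc] at hab
      rw [← mod_iff a.2, Nat.mod_eq_of_lt b.2] at hab
      exact Fin.ext hab
    · intro v
      obtain ⟨i, rfl⟩ := h.surj v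
      have hpos : (0 : ℤ) < m := by omega
      have h0 := Int.emod_nonneg (2 * (i / 2)) hpos.ne'
      have h1 := Int.emod_lt_of_pos (2 * (i / 2)) hpos
      refine ⟨⟨(2 * (i / 2) % m).toNat, by omega⟩, ?_⟩
      simp only
      rw [Int.toNat_of_nonneg h0, hhalf i, hg]
      obtain ⟨q, hq⟩ : (m : ℤ) ∣ 2 * (i / 2) - 2 * (i / 2) % m := Int.dvd_self_sub_emod
      generalize 2 * (i / 2) % m = r at *
      generalize i / 2 = t at *
      refine ⟨t - q * c, ?_⟩
      have : r = 2 * t - m * q := by linarith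
      have h3 : 2 * c = m + 1 := by linarith
      rw [this]
      linear_combination t * h3
  refine ⟨RelIso.symm ⟨Equiv.ofBijective _ hb, ?_⟩⟩
  intro a b
  have em : ∀ a b : Fin m, ∀ d : ℕ, b.val = (a.val + d) % m ↔ (m : ℤ) ∣ (b.val : ℤ) - a.val - d := by
    intro a b d
    rw [mod_iff b.2]
    push_cast
    rw [sub_sub]
  have em1 := fun a b => em a b 1
  have em2 := fun a b => em a b 2
  push_cast at em1 em2
  simp only [Equiv.ofBijective_apply, squareCycle, SimpleGraph.fromRel_adj, em1, em2]
  constructor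
  · intro hadj
    refine ⟨fun hab => hadj.ne (by rw [hab]), ?_⟩
    have := hN _ _ hadj
    simp only [← sub_mul, hm1, hm2] at this
    tauto
  · rintro ⟨_, (h1 | h1) | (h1 | h1)⟩
    · apply hrg'
      rwa [← sub_mul, hm2]
    · apply hrail'
      rwa [← sub_mul, hm1]
    · symm; apply hrg'
      rwa [← sub_mul, hm2]
    · symm; apply hrail'
      rwa [← sub_mul, hm1]

lemma Mdl.card_le {m : ℕ} {R : ℤ → Prop} {f : ℤ → V} (h : Mdl G m R f) (hm : 0 < m) :
    Fintype.card V ≤ 2 * m := by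
  have hs : Function.Surjective (fun a : Fin (2 * m) => f a.val) := by
    intro v
    obtain ⟨i, rfl⟩ := h.surj v
    have hpos : (0 : ℤ) < 2 * m := by omega
    have h0 := Int.emod_nonneg i hpos.ne'
    have h1 := Int.emod_lt_of_pos i hpos
    refine ⟨⟨(i % (2 * m)).toNat, by omega⟩, ?_⟩
    simp only
    rw [Int.toNat_of_nonneg h0]
    exact (h.eq_of_dvd Int.dvd_self_sub_emod).symm
  simpa using Fintype.card_le_of_surjective _ hs

lemma Mdl.final (h4 : InternallyFourConnected G) {m : ℕ} (hm : 3 ≤ m) {f : ℤ → V}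
    (h : Mdl G m (fun _ => True) f) (hmin : ¬ ∃ f', Mdl G ((m : ℤ) - 1) (fun _ => True) f') :
    ∃ n, 3 ≤ n ∧
      (Nonempty (G ≃g mobiusLadder n) ∨ Nonempty (G ≃g squareCycle (2 * n - 1))) := by
  have hund := fun k => h.undeletable h4 (by omega) hmin k
  by_cases hB : ∃ k, f k = f (k + m)
  · obtain ⟨k, hk⟩ := hB
    refine ⟨3, le_rfl, Or.inr ?_⟩
    apply k5_of_card h4
    refine (h.rotate k).small h4 (by omega) (by simpa [add_comm] using hk) ?_
    intro j
    by_cases hj : f (j + k) = f (j + k + m)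
    · left; rw [hj]; congr 1; ring
    · right
      rw [show j + m + k = j + k + m by ring]
      exact (hund _ hj).1
  push Not at hB
  have hrung : ∀ i, G.Adj (f i) (f (i + m)) := fun i => (hund i (hB i)).1
  have hpp : ∀ i, f (i + m + m) = f i := fun i => by
    rw [add_assoc, ← two_mul]; exact h.per i
  have hpar : ∀ i, f i = f (i + 1) → f (i + m) ≠ f (i + m + 1) := by
    intro i hi hi'
    refine (hund i (hB i)).2 (i + 1) ?_ ⟨hi.symm, ?_⟩
    · rw [show i + 1 - i = 1 by ring]
      intro hd
      have := Int.le_of_dvd one_pos hd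
      omega
    · rw [hi']; congr 1; ring
  have hN : ∀ k, f k ≠ f (k + 1) → f k ≠ f (k - 1) → ∀ y, G.Adj (f k) y →
      y = f (k + 1) ∨ y = f (k - 1) ∨ y = f (k + m) := by
    intro k h1 h2 y hy
    have hs := h.single k h1 h2 (fun i _ _ => (hrung i).ne)
    rcases h.single_adj k hs y hy with h1 | h1 | h1
    · exact Or.inl h1
    · exact Or.inr (Or.inl h1)
    · exact Or.inr (Or.inr h1.1)
  by_cases hE : ∃ i, f i = f (i + 1)
  swap
  · push Not at hE
    exact ⟨m, hm, Or.inl (h.iso_ladder h4 hm hrung hE)⟩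
  have hup : ∀ i, f i = f (i + 1) → f (i + m + 1) = f (i + m + 2) := by
    intro i hi
    by_contra hne
    have ha := hpar i hi
    have e1 : i + m + 1 + 1 = i + m + 2 := by ring
    have e2 : i + m + 1 - 1 = i + m := by ring
    have e3 : f (i + m + 1 + m) = f i := by
      rw [show i + m + 1 + m = i + 1 + m + m by ring, hpp, hi]
    have := hN (i + m + 1) (by rw [e1]; exact hne) (by rw [e2]; exact ha.symm)
    rw [e1, e2, e3] at this
    refine no_tri h4 _ _ _ _ this (Or.inr (hrung i).symm)
  have hdown : ∀ i, f i = f (i + 1) → f (i + m - 1) = f (i + m) := by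
    intro i hi
    by_contra hne
    have ha := hpar i hi
    have e3 : f (i + m + m) = f (i + 1) := by rw [hpp, hi]
    have := hN (i + m) ha (fun hh => hne hh.symm)
    rw [e3] at this
    refine no_tri h4 (f (i + m)) (f (i + m - 1)) (f (i + m + 1)) (f (i + 1)) ?_ (Or.inr ?_)
    · intro y hy; have := this y hy; tauto
    · have := hrung (i + 1)
      rw [show i + m + 1 = i + 1 + m by ring]
      exact this.symm
  have h3 : ∀ i, f i = f (i + 1) → f (i + 1) ≠ f (i + 2) := by
    intro i hi hi'
    have a1 := hpar i hi
    have a2 := hpar (i + 1) (by rw [hi']; congr 1; ring)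
    have e0 : i + 1 + m = i + m + 1 := by ring
    have e1 : i + m + 1 + 1 = i + m + 2 := by ring
    have e2 : i + m + 1 - 1 = i + m := by ring
    have e3 : f (i + m + 1 + m) = f i := by
      rw [show i + m + 1 + m = i + 1 + m + m by ring, hpp, hi]
    rw [e0] at a2
    have := hN (i + m + 1) a2 (by rw [e2]; exact a1.symm)
    rw [e1, e2, e3] at this
    refine no_tri h4 _ _ _ _ this (Or.inr (hrung i).symm)
  have hp2 : ∀ i, f i = f (i + 1) → f (i + 2) = f (i + 2 + 1) := by
    intro i hi
    have a1 := hup i hi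
    have a2 := hup (i + m + 1) (by rw [a1]; congr 1; ring)
    rw [show i + m + 1 + m + 1 = i + 2 + m + m by ring,
      show i + m + 1 + m + 2 = i + 2 + 1 + m + m by ring, hpp, hpp] at a2
    exact a2
  have hm2 : ∀ i, f i = f (i + 1) → f (i - 2) = f (i - 2 + 1) := by
    intro i hi
    have a1 := hdown i hi
    have a2 := hdown (i + m - 1) (by rw [a1]; congr 1; ring)
    rw [show i + m - 1 + m - 1 = i - 2 + m + m by ring,
      show i + m - 1 + m = i - 2 + 1 + m + m by ring, hpp, hpp] at a2
    exact a2
  obtain ⟨i0, hi0⟩ := hE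
  have hall : ∀ t : ℤ, f (2 * t + i0) = f (2 * t + i0 + 1) := by
    intro t
    induction t using Int.induction_on with
    | zero => simpa using hi0
    | succ t ih =>
      have := hp2 _ ih
      rwa [show 2 * (t : ℤ) + i0 + 2 = 2 * (t + 1) + i0 by ring] at this
    | pred t ih =>
      have := hm2 _ ih
      rwa [show 2 * (-(t : ℤ)) + i0 - 2 = 2 * (-(t : ℤ) - 1) + i0 by ring] at this
  have hodd : ∃ c : ℤ, (m : ℤ) = 2 * c - 1 := by
    rcases Int.even_or_odd' (m : ℤ) with ⟨a, ha | ha⟩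
    · exfalso
      have a1 := hup i0 hi0
      have a2 := hall a
      have a3 := h3 _ a2
      apply a3
      rw [show 2 * a + i0 + 1 = i0 + m + 1 by rw [ha]; ring,
        show 2 * a + i0 + 2 = i0 + m + 2 by rw [ha]; ring, a1]
    · exact ⟨a + 1, by rw [ha]; ring⟩
  obtain ⟨c, hc⟩ := hodd
  have iso := (h.rotate i0).iso_square h4 hm c hc
    (fun i => by
      have := hrung (i + i0)
      rwa [show i + i0 + m = i + m + i0 by ring] at this)
    (fun t => by
      have := hall t
      rwa [show 2 * t + i0 + 1 = 2 * t + 1 + i0 by ring] at this)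
    (fun t => by
      have := h3 _ (hall t)
      rwa [show 2 * t + i0 + 1 = 2 * t + 1 + i0 by ring,
        show 2 * t + i0 + 2 = 2 * t + 1 + 1 + i0 by ring] at this)
  have hcard : 5 ≤ m := by
    obtain ⟨e⟩ := iso
    have h5 := h4.2.1
    rw [Nat.card_congr e.toEquiv] at h5
    simpa using h5
  refine ⟨c.toNat, by omega, Or.inr ?_⟩
  rwa [show 2 * c.toNat - 1 = m by omega]

/-! ### From minors to periodic models -/

lemma exists_mdl (h5 : Nonempty V) {m : ℕ} (hm : 0 < m) (hmin : IsMinor G (mobiusLadder m)) :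
    ∃ f, Mdl G m (fun _ => True) f := by
  classical
  obtain ⟨B, hne, hconn, hdis, hadj⟩ := hmin
  have hpos : (0 : ℤ) < 2 * m := by omega
  have hlt : ∀ i : ℤ, (i % (2 * m)).toNat < 2 * m := by
    intro i
    have h0 := Int.emod_nonneg i hpos.ne'
    have h1 := Int.emod_lt_of_pos i hpos
    omega
  let c : ℤ → Fin (2 * m) := fun i => ⟨(i % (2 * m)).toNat, hlt i⟩
  have cval : ∀ i, ((c i).val : ℤ) = i % (2 * m) := fun i =>
    Int.toNat_of_nonneg (Int.emod_nonneg i hpos.ne')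
  have ceq : ∀ i j, 2 * (m : ℤ) ∣ i - j → c i = c j := by
    intro i j hd
    have : i % (2 * m) = j % (2 * m) :=
      Int.emod_eq_emod_iff_emod_sub_eq_zero.2 (Int.emod_eq_zero_of_dvd hd)
    simp only [c, this]
  have cself : ∀ a : Fin (2 * m), c a.val = a := by
    intro a
    apply Fin.ext
    have := cval a.val
    rw [Int.emod_eq_of_lt (by omega) (by have := a.2; omega)] at this
    exact_mod_cast this
  have cnat : ∀ (a : Fin (2 * m)) (n : ℕ), a.val = n % (2 * m) → a = c n := by
    intro a n han
    apply Fin.ext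
    have := cval n
    have h2 : (a.val : ℤ) = (n : ℤ) % (2 * m) := by rw [han]; push_cast; rfl
    omega
  have cper : ∀ i, c (i + 2 * m) = c i := fun i => ceq _ _ (by simp)
  -- adjacency in the ladder
  have cadj : ∀ a b, (mobiusLadder m).Adj a b → b = c (a.val + 1) ∨ a = c (b.val + 1) ∨
      b = c (a.val + m) ∨ a = c (b.val + m) := by
    intro a b hab
    simp only [mobiusLadder, SimpleGraph.fromRel_adj] at hab
    rcases hab with ⟨_, (h1 | h1) | (h1 | h1)⟩
    · left; exact_mod_cast cnat _ _ h1
    · right; right; left; exact_mod_cast cnat _ _ h1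
    · right; left; exact_mod_cast cnat _ _ h1
    · right; right; right; exact_mod_cast cnat _ _ h1
  have huniq : ∀ a w w', a ∈ B w → a ∈ B w' → w = w' := by
    intro a w w' h1 h2
    by_contra hww
    exact Set.disjoint_left.1 (hdis hww) h1 h2
  -- every position is followed by a covered one
  have hex : ∀ i : ℤ, ∃ n : ℕ, ∃ w, c (i + n) ∈ B w := by
    intro i
    obtain ⟨w⟩ := h5
    obtain ⟨a, ha⟩ := hne w
    refine ⟨((a.val - i) % (2 * m)).toNat, w, ?_⟩
    have h0 := Int.emod_nonneg ((a.val : ℤ) - i) hpos.ne'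
    rw [Int.toNat_of_nonneg h0]
    have : c (i + ((a.val : ℤ) - i) % (2 * m)) = a := by
      conv_rhs => rw [← cself a]
      apply ceq
      rw [← dvd_neg]
      have := Int.dvd_self_sub_emod (m := 2 * (m : ℤ)) (x := (a.val : ℤ) - i)
      generalize ((a.val : ℤ) - i) % (2 * (m : ℤ)) = r at this ⊢
      rwa [show -(i + r - (a.val : ℤ)) = a.val - i - r by omega]
    rw [this]; exact ha
  let N : ℤ → ℕ := fun i => Nat.find (hex i)
  have hN : ∀ i, ∃ w, c (i + N i) ∈ B w := fun i => Nat.find_spec (hex i)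
  choose f hf using hN
  have hf1 : ∀ i w, c i ∈ B w → f i = w := by
    intro i w hw
    have : N i = 0 := by
      rw [Nat.find_eq_zero]; exact ⟨w, by simpa using hw⟩
    have h2 := hf i
    rw [this] at h2
    exact huniq _ _ _ h2 (by simpa using hw)
  have hf2 : ∀ i, (¬ ∃ w, c i ∈ B w) → f i = f (i + 1) := by
    intro i hi
    have h1 := hf i
    have h0 : N i ≠ 0 := by
      intro h0
      rw [h0] at h1
      exact hi ⟨_, by simpa using h1⟩
    have : N i = N (i + 1) + 1 := by
      apply le_antisymm
      · apply Nat.find_min'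
        refine ⟨f (i + 1), ?_⟩
        have := hf (i + 1)
        push_cast
        rwa [show i + ((N (i + 1) : ℤ) + 1) = i + 1 + N (i + 1) by ring]
      · have : N (i + 1) ≤ N i - 1 := by
          apply Nat.find_min'
          refine ⟨f i, ?_⟩
          rwa [show i + 1 + ((N i - 1 : ℕ) : ℤ) = i + N i by omega]
        omega
    rw [this] at h1
    push_cast at h1
    rw [show i + ((N (i + 1) : ℤ) + 1) = i + 1 + N (i + 1) by ring] at h1
    exact huniq _ _ _ h1 (hf (i + 1))
  have hfper : ∀ i, f (i + 2 * m) = f i := by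
    intro i
    have hNp : N (i + 2 * m) = N i := by
      have e : ∀ n : ℕ, c (i + 2 * m + n) = c (i + n) := fun n => by
        rw [← cper (i + n)]; congr 1; ring
      apply le_antisymm
      · apply Nat.find_min'
        exact ⟨_, by rw [e]; exact hf i⟩
      · apply Nat.find_min'
        exact ⟨_, by rw [← e]; exact hf (i + 2 * m)⟩
    have h1 := hf (i + 2 * m)
    rw [hNp, show i + 2 * (m : ℤ) + N i = i + N i + 2 * m by ring, cper] at h1
    exact huniq _ _ _ h1 (hf i)
  refine ⟨f, hfper, ?_, ?_, ?_⟩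
  · intro v
    obtain ⟨a, ha⟩ := hne v
    exact ⟨a.val, hf1 _ _ (by rw [cself]; exact ha)⟩
  · intro u w huw
    obtain ⟨a, ha, b, hb, hab⟩ := hadj huw
    have fa : f a.val = u := hf1 _ _ (by rw [cself]; exact ha)
    have fb : f b.val = w := hf1 _ _ (by rw [cself]; exact hb)
    rcases cadj a b hab with h1 | h1 | h1 | h1
    · exact ⟨a.val, Or.inl ⟨fa, hf1 _ _ (h1 ▸ hb)⟩⟩
    · exact ⟨b.val, Or.inr (Or.inl ⟨fb, hf1 _ _ (h1 ▸ ha)⟩)⟩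
    · exact ⟨a.val, Or.inr (Or.inr ⟨trivial, fa, hf1 _ _ (h1 ▸ hb)⟩)⟩
    · have e : f (b.val + m) = u := hf1 _ _ (h1 ▸ ha)
      refine ⟨b.val + m, Or.inr (Or.inr ⟨trivial, e, ?_⟩)⟩
      rw [add_assoc, ← two_mul, hfper, fb]
  · intro P hP hr hg
    have hPd : ∀ x y : ℤ, 2 * (m : ℤ) ∣ x - y → (P x ↔ P y) := by
      intro x y hd
      have : P x = P y := per_dvd (fun i => propext (hP i)) hd
      rw [this]
    have hPc : ∀ i, P ((c i).val : ℤ) ↔ P i := by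
      intro i
      rw [cval]
      apply hPd
      rw [← dvd_neg, neg_sub]
      exact Int.dvd_self_sub_emod
    -- the predicate is constant on branch sets
    have hstep : ∀ w a b, a ∈ B w → b ∈ B w → (mobiusLadder m).Adj a b →
        (P (a.val : ℤ) ↔ P (b.val : ℤ)) := by
      intro w a b ha hb hab
      have fa : f a.val = w := hf1 _ _ (by rw [cself]; exact ha)
      have fb : f b.val = w := hf1 _ _ (by rw [cself]; exact hb)
      rcases cadj a b hab with h1 | h1 | h1 | h1
      · have e := hr a.val (by rw [fa]; exact (hf1 _ _ (h1 ▸ hb)).symm)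
        rw [e, ← hPc, ← h1]
      · have e := hr b.val (by rw [fb]; exact (hf1 _ _ (h1 ▸ ha)).symm)
        rw [e, ← hPc (b.val + 1), ← h1]
      · have e := hg a.val trivial (by rw [fa]; exact (hf1 _ _ (h1 ▸ hb)).symm)
        rw [e, ← hPc, ← h1]
      · have e := hg b.val trivial (by rw [fb]; exact (hf1 _ _ (h1 ▸ ha)).symm)
        rw [e, ← hPc (b.val + m), ← h1]
    have hB : ∀ w a b, a ∈ B w → b ∈ B w → (P (a.val : ℤ) ↔ P (b.val : ℤ)) := by
      intro w a b ha hb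
      obtain ⟨p⟩ := (hconn w).preconnected ⟨a, ha⟩ ⟨b, hb⟩
      have key : ∀ x y : B w, ((mobiusLadder m).induce (B w)).Walk x y →
          (P (x.1.val : ℤ) ↔ P (y.1.val : ℤ)) := by
        intro x y p
        induction p with
        | nil => exact Iff.rfl
        | @cons u v z huv p ih =>
          exact (hstep w u.1 v.1 u.2 v.2 huv).trans ih
      exact key _ _ p
    have hnext : ∀ n : ℕ, ∀ i, (∃ w, c (i + n) ∈ B w) →
        ∃ j, (∃ w, c j ∈ B w) ∧ f j = f i ∧ (P i ↔ P j) := by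
      intro n
      induction n with
      | zero =>
        rintro i ⟨w, hw⟩
        exact ⟨i, ⟨w, by simpa using hw⟩, rfl, Iff.rfl⟩
      | succ n ih =>
        rintro i ⟨w, hw⟩
        by_cases hc : ∃ w, c i ∈ B w
        · exact ⟨i, hc, rfl, Iff.rfl⟩
        · have e := hf2 i hc
          obtain ⟨j, h1, h2, h3⟩ := ih (i + 1) ⟨w, by
            push_cast at hw
            rwa [show i + 1 + (n : ℤ) = i + (n + 1) by ring]⟩
          exact ⟨j, h1, by rw [h2, e], (hr i e).trans h3⟩
    intro i j hij
    obtain ⟨i', ⟨w, hw⟩, hi', hPi⟩ := hnext _ i (hex i).choose_spec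
    obtain ⟨j', ⟨w', hw'⟩, hj', hPj⟩ := hnext _ j (hex j).choose_spec
    have : w = w' := by
      rw [← hf1 _ _ hw, ← hf1 _ _ hw', hi', hj', hij]
    subst this
    rw [hPi, hPj, ← hPc i', ← hPc j']
    exact hB w _ _ hw hw'

end Mob

/-- An internally 4-connected nonplanar minor of a Möbius ladder is `M_n` or
`C²_{2n-1}` for some `n ≥ 3`. -/
theorem stmt6 {V : Type} [Fintype V] (G : SimpleGraph V)
    (h4 : InternallyFourConnected G) (hnp : ¬ Planar G)
    (hm : ∃ m, 3 ≤ m ∧ IsMinor G (mobiusLadder m)) :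
    ∃ n, 3 ≤ n ∧
      (Nonempty (G ≃g mobiusLadder n) ∨ Nonempty (G ≃g squareCycle (2 * n - 1))) := by
  classical
  have hcard : 5 ≤ Fintype.card V := by
    have := h4.2.1
    rwa [Nat.card_eq_fintype_card] at this
  have hV : Nonempty V := Fintype.card_pos_iff.1 (by omega)
  have hex : ∃ m : ℕ, 0 < m ∧ ∃ f, Mob.Mdl G (m : ℤ) (fun _ => True) f := by
    obtain ⟨m, hm3, hmm⟩ := hm
    exact ⟨m, by omega, Mob.exists_mdl hV (by omega) hmm⟩
  obtain ⟨hpos, f, hf⟩ := Nat.find_spec hex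
  have hm3 : 3 ≤ Nat.find hex := by
    have := hf.card_le hpos
    omega
  refine hf.final h4 hm3 ?_
  intro hcon
  refine Nat.find_min hex (m := Nat.find hex - 1) (by omega) ⟨by omega, ?_⟩
  rwa [show ((Nat.find hex - 1 : ℕ) : ℤ) = (Nat.find hex : ℤ) - 1 by omega]
end

section
/- Let H be a simple graph with at least 3 vertices. If a 3-connected graph G has a subgraph G' such that G' is a subdivision of H and G' has fewer vertices than G, then G contains a triad addition of H as a minor, i.e., a graph obtained from H by adding a new vertex joined to three distinct vertices of H. -/
open SimpleGraph

namespace Triad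

open Set

/-- Connectedness of an induced subgraph. -/
def Conn {V : Type} (G : SimpleGraph V) (S : Set V) : Prop := (G.induce S).Connected

theorem conn_singleton {V : Type} (G : SimpleGraph V) (v : V) : Conn G {v} := by
  unfold Conn
  apply induce_connected_of_patches v (by simp)
  intro w hw
  simp only [Set.mem_singleton_iff] at hw
  subst hw
  exact ⟨{w}, le_rfl, by simp, by simp, Reachable.refl _⟩

theorem conn_union {V : Type} {G : SimpleGraph V} {S T : Set V} (hS : Conn G S) (hT : Conn G T)
    (x : V) (hx : x ∈ S) (hx' : x ∈ T) : Conn G (S ∪ T) :=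
  induce_union_connected hS.preconnected hT.preconnected ⟨x, hx, hx'⟩

theorem conn_union_adj {V : Type} {G : SimpleGraph V} {S T : Set V} (hS : Conn G S)
    (hT : Conn G T) {x y : V} (hx : x ∈ S) (hy : y ∈ T) (h : G.Adj x y) : Conn G (S ∪ T) := by
  have h1 : Conn G {x, y} := induce_pair_connected_of_adj h
  have h2 := conn_union (conn_union hS h1 x hx (by simp)) hT y (by simp) hy
  have : S ∪ {x, y} ∪ T = S ∪ T := by
    ext z; simp only [mem_union, mem_insert_iff, mem_singleton_iff]; grind
  rwa [this] at h2

theorem conn_insert {V : Type} {G : SimpleGraph V} {S : Set V} (hS : Conn G S)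
    {x y : V} (hx : x ∈ S) (h : G.Adj x y) : Conn G (S ∪ {y}) :=
  conn_union_adj hS (conn_singleton G y) hx rfl h

theorem conn_interval {V : Type} {G : SimpleGraph V} {g : ℕ → V} {n : ℕ}
    (hg : ∀ i, i < n → G.Adj (g i) (g (i + 1))) (i j : ℕ) (hij : i ≤ j) (hj : j ≤ n) :
    Conn G (g '' Set.Icc i j) := by
  induction j, hij using Nat.le_induction with
  | base => simpa using conn_singleton G (g i)
  | succ j hij ih =>
    have h1 := conn_insert (ih (by omega)) (x := g j) ⟨j, ⟨hij, le_rfl⟩, rfl⟩ (hg j (by omega))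
    have : g '' Set.Icc i (j + 1) = g '' Set.Icc i j ∪ {g (j + 1)} := by
      rw [← Set.image_singleton, ← Set.image_union]
      congr 1
      ext z; simp only [Set.mem_Icc, mem_union, mem_singleton_iff]; omega
    rwa [this]

theorem conn_path {V : Type} {G : SimpleGraph V} {S : Set V} (hS : Conn G S) {s t : V}
    (hs : s ∈ S) (ht : t ∈ S) : ∃ p : G.Walk s t, p.IsPath ∧ ∀ x ∈ p.support, x ∈ S := by
  classical
  obtain ⟨p, hp⟩ := (hS.preconnected ⟨s, hs⟩ ⟨t, ht⟩).exists_isPath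
  refine ⟨p.map (SimpleGraph.Embedding.induce S).toHom, ?_, ?_⟩
  · exact hp.map Subtype.val_injective
  · intro x hx
    have hx2 : x ∈ (p.map (SimpleGraph.Embedding.induce S).toHom).support := hx
    rw [Walk.support_map] at hx2
    obtain ⟨y, -, rfl⟩ := List.mem_map.1 hx2
    exact y.2

theorem cross {V : Type} [Fintype V] {G : SimpleGraph V} (h3 : KConnected G 3) (s M : Set V)
    (hs : s.ncard < 3) {x y : V} (hx : x ∈ M) (hxs : x ∉ s) (hy : y ∉ M) (hys : y ∉ s) :
    ∃ m ∈ M, ∃ z, z ∉ M ∧ z ∉ s ∧ G.Adj m z := by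
  by_contra hcon
  push Not at hcon
  have hc := (h3.2 s hs).preconnected ⟨x, hxs⟩ ⟨y, hys⟩
  obtain ⟨p⟩ := hc
  have key : ∀ (a b : (sᶜ : Set V)), (G.induce sᶜ).Walk a b → a.1 ∈ M → b.1 ∈ M := by
    intro a b p
    induction p with
    | nil => exact id
    | @cons a b c h p ih =>
      intro ha
      apply ih
      by_contra hb
      exact hcon _ ha _ hb b.2 h
  exact hy (key _ _ p hx)

/-- Final assembly of the minor. -/
theorem final {U V E : Type} {H : SimpleGraph U} {G : SimpleGraph V} (src tgt : E → U)
    (hE : ∀ u v, H.Adj u v → ∃ e, (src e = u ∧ tgt e = v) ∨ (src e = v ∧ tgt e = u))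
    (f : U → V) (hf : Function.Injective f) (L R : E → Set V) (D : Set V)
    (hL : ∀ e, Conn G (L e)) (hR : ∀ e, Conn G (R e))
    (hfL : ∀ e, f (src e) ∈ L e) (hfR : ∀ e, f (tgt e) ∈ R e)
    (hLR : ∀ e, ∃ a ∈ L e, ∃ b ∈ R e, G.Adj a b)
    (hdis : ∀ e, ∀ x ∈ L e, x ∉ R e)
    (hLf : ∀ e w, f w ∈ L e → w = src e) (hRf : ∀ e w, f w ∈ R e → w = tgt e)
    (hee : ∀ e e', e ≠ e' → ∀ x, x ∈ L e ∪ R e → x ∈ L e' ∪ R e' → ∃ w, x = f w)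
    (hD : Conn G D) (hDf : ∀ w, f w ∉ D) (hDLR : ∀ e, ∀ x ∈ L e ∪ R e, x ∉ D)
    (x y z : U) (hxy : x ≠ y) (hyz : y ≠ z) (hxz : x ≠ z)
    (hadj : ∀ u, u = x ∨ u = y ∨ u = z → ∃ d ∈ D, ∃ r, G.Adj d r ∧
      (r = f u ∨ ∃ e, (r ∈ L e ∧ u = src e) ∨ (r ∈ R e ∧ u = tgt e))) :
    ∃ x y z : U, x ≠ y ∧ y ≠ z ∧ x ≠ z ∧ IsMinor (triadAddition H x y z) G := by
  refine ⟨x, y, z, hxy, hyz, hxz, ?_⟩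
  let B0 : U → Set V := fun u =>
    {r | r = f u ∨ ∃ e, (r ∈ L e ∧ u = src e) ∨ (r ∈ R e ∧ u = tgt e)}
  have hB0 : ∀ u r, r ∈ B0 u ↔ (r = f u ∨ ∃ e, (r ∈ L e ∧ u = src e) ∨ (r ∈ R e ∧ u = tgt e)) :=
    fun _ _ => Iff.rfl
  let B : Option U → Set V := fun o => o.elim D B0
  have hDB : ∀ u r, r ∈ B0 u → r ∉ D := by
    rintro u r (rfl | ⟨e, ⟨h, -⟩ | ⟨h, -⟩⟩)
    · exact hDf u
    · exact hDLR e r (Or.inl h)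
    · exact hDLR e r (Or.inr h)
  have hBf : ∀ u w, f w ∈ B0 u → w = u := by
    rintro u w (h | ⟨e, ⟨h, rfl⟩ | ⟨h, rfl⟩⟩)
    · exact hf h
    · exact hLf e w h
    · exact hRf e w h
  have hBd : ∀ u u' r, r ∈ B0 u → r ∈ B0 u' → u = u' := by
    intro u u' r h h'
    by_cases hr : ∃ w, r = f w
    · obtain ⟨w, rfl⟩ := hr
      rw [← hBf u w h, ← hBf u' w h']
    · have h1 : ∃ e, (r ∈ L e ∧ u = src e) ∨ (r ∈ R e ∧ u = tgt e) :=
        h.resolve_left fun h => hr ⟨_, h⟩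
      have h2 : ∃ e, (r ∈ L e ∧ u' = src e) ∨ (r ∈ R e ∧ u' = tgt e) :=
        h'.resolve_left fun h => hr ⟨_, h⟩
      obtain ⟨e, he⟩ := h1
      obtain ⟨e', he'⟩ := h2
      by_cases hee' : e = e'
      · subst hee'
        have := hdis e r
        grind
      · exact absurd (hee e e' hee' r (by grind) (by grind)) hr
  have hBc : ∀ u, Conn G (B0 u) := by
    intro u
    apply induce_connected_of_patches (f u) (Or.inl rfl)
    rintro v (rfl | ⟨e, ⟨h, rfl⟩ | ⟨h, rfl⟩⟩)
    · exact ⟨{f u}, by rintro _ rfl; exact Or.inl rfl, rfl, rfl, Reachable.refl _⟩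
    · exact ⟨L e, fun r hr => Or.inr ⟨e, Or.inl ⟨hr, rfl⟩⟩, hfL e, h, (hL e).preconnected _ _⟩
    · exact ⟨R e, fun r hr => Or.inr ⟨e, Or.inr ⟨hr, rfl⟩⟩, hfR e, h, (hR e).preconnected _ _⟩
  have hadjH : ∀ u v, H.Adj u v → ∃ a ∈ B0 u, ∃ b ∈ B0 v, G.Adj a b := by
    intro u v huv
    obtain ⟨e, he⟩ := hE u v huv
    obtain ⟨a, ha, b, hb, hab⟩ := hLR e
    rcases he with ⟨rfl, rfl⟩ | ⟨rfl, rfl⟩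
    · exact ⟨a, Or.inr ⟨e, Or.inl ⟨ha, rfl⟩⟩, b, Or.inr ⟨e, Or.inr ⟨hb, rfl⟩⟩, hab⟩
    · exact ⟨b, Or.inr ⟨e, Or.inr ⟨hb, rfl⟩⟩, a, Or.inr ⟨e, Or.inl ⟨ha, rfl⟩⟩, hab.symm⟩
  have hadjD : ∀ u, u = x ∨ u = y ∨ u = z → ∃ d ∈ D, ∃ r ∈ B0 u, G.Adj d r := by
    intro u hu
    obtain ⟨d, hd, r, hdr, hr⟩ := hadj u hu
    exact ⟨d, hd, r, hr, hdr⟩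
  refine ⟨B, ?_, ?_, ?_, ?_⟩
  · rintro (_ | u)
    · obtain ⟨d, hd⟩ := hD.nonempty
      exact ⟨d, hd⟩
    · exact ⟨f u, Or.inl rfl⟩
  · rintro (_ | u)
    · exact hD
    · exact hBc u
  · rintro (_ | u) (_ | v) huv
    · exact absurd rfl huv
    · exact Set.disjoint_left.2 fun r h h' => hDB v r h' h
    · exact Set.disjoint_left.2 fun r h h' => hDB u r h h'
    · exact Set.disjoint_left.2 fun r h h' => huv (by rw [hBd u v r h h'])
  · rintro (_ | u) (_ | v) huv
    · exact absurd rfl huv.ne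
    · simp only [triadAddition, fromRel_adj] at huv
      exact hadjD v (by simpa using huv.2)
    · simp only [triadAddition, fromRel_adj] at huv
      obtain ⟨d, hd, r, hr, h⟩ := hadjD u (by simpa using huv.2)
      exact ⟨r, hr, d, hd, h.symm⟩
    · simp only [triadAddition, fromRel_adj] at huv
      exact hadjH u v (by have := huv.2; rcases this with h | h; exacts [h, h.symm])

/-- A subdivision of `H` (paths `g e` of length `n e`) and a disjoint connected set `C`. -/
structure Cfg {U V E : Type} (G : SimpleGraph V) (src tgt : E → U) (f : U → V)
    (g : E → ℕ → V) (n : E → ℕ) (C : Set V) : Prop where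
  g0 : ∀ e, g e 0 = f (src e)
  gn : ∀ e, g e (n e) = f (tgt e)
  adj : ∀ e i, i < n e → G.Adj (g e i) (g e (i + 1))
  inj : ∀ e i j, i ≤ n e → j ≤ n e → g e i = g e j → i = j
  br : ∀ e i w, i ≤ n e → g e i = f w → i = 0 ∨ i = n e
  dis : ∀ e e' i j, e ≠ e' → i ≤ n e → j ≤ n e' → g e i = g e' j → ∃ w, g e i = f w
  conn : Conn G C
  Cf : ∀ w, f w ∉ C
  Cg : ∀ e i, i ≤ n e → g e i ∉ C

/-- The vertex set of the subdivision. -/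
def Vs {U V E : Type} (f : U → V) (g : E → ℕ → V) (n : E → ℕ) : Set V :=
  {r | (∃ w, r = f w) ∨ ∃ e i, i ≤ n e ∧ r = g e i}

/-- Structure of the oriented edge set. -/
structure Ori {U E : Type} (H : SimpleGraph U) (src tgt : E → U) : Prop where
  hE : ∀ u v, H.Adj u v → ∃ e, (src e = u ∧ tgt e = v) ∨ (src e = v ∧ tgt e = u)
  ne : ∀ e, src e ≠ tgt e
  uniq : ∀ e e', e ≠ e' → ¬ ((src e = src e' ∧ tgt e = tgt e') ∨ (src e = tgt e' ∧ tgt e = src e'))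

section
variable {U V E : Type} {H : SimpleGraph U} {G : SimpleGraph V} {src tgt : E → U}
  {f : U → V} {g : E → ℕ → V} {n : E → ℕ} {C : Set V}

theorem Cfg.npos (c : Cfg G src tgt f g n C) (o : Ori H src tgt) (hf : Function.Injective f)
    (e : E) : 0 < n e := by
  rcases Nat.eq_zero_or_pos (n e) with h | h
  · have h1 := c.g0 e
    have h2 := c.gn e
    rw [h, h1] at h2
    exact absurd (hf h2) (o.ne e)
  · exact h

theorem Cfg.brs (c : Cfg G src tgt f g n C) (hf : Function.Injective f)
    (e : E) (i : ℕ) (w : U) (hi : i ≤ n e) (h : g e i = f w) :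
    (i = 0 ∧ w = src e) ∨ (i = n e ∧ w = tgt e) := by
  rcases c.br e i w hi h with rfl | rfl
  · left; refine ⟨rfl, hf ?_⟩; rw [← h, c.g0]
  · right; refine ⟨rfl, hf ?_⟩; rw [← h, c.gn]

/-- The minor obtained from a choice of cut on each path, except that on one path `e0`
two arbitrary sets are used. -/
theorem Cfg.cutFinal (c : Cfg G src tgt f g n C) (o : Ori H src tgt) (hf : Function.Injective f)
    (k : E → ℕ) (hk : ∀ e, k e < n e)
    (x y z : U) (hxy : x ≠ y) (hyz : y ≠ z) (hxz : x ≠ z)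
    (hadj : ∀ u, u = x ∨ u = y ∨ u = z → ∃ d ∈ C, ∃ r, G.Adj d r ∧
      (r = f u ∨ ∃ e i, i ≤ n e ∧ r = g e i ∧ ((i ≤ k e ∧ u = src e) ∨ (k e < i ∧ u = tgt e)))) :
    ∃ x y z : U, x ≠ y ∧ y ≠ z ∧ x ≠ z ∧ IsMinor (triadAddition H x y z) G := by
  apply final src tgt o.hE f hf (fun e => g e '' Set.Icc 0 (k e))
    (fun e => g e '' Set.Icc (k e + 1) (n e)) C
  · exact fun e => conn_interval (c.adj e) _ _ (by omega) (hk e).le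
  · exact fun e => conn_interval (c.adj e) _ _ (hk e) le_rfl
  · exact fun e => ⟨0, by simp, c.g0 e⟩
  · exact fun e => ⟨n e, by have := hk e; simp; omega, c.gn e⟩
  · exact fun e => ⟨_, ⟨k e, by simp, rfl⟩, _, ⟨k e + 1, by have := hk e; simp; omega, rfl⟩,
      c.adj e _ (hk e)⟩
  · rintro e _ ⟨i, hi, rfl⟩ ⟨j, hj, h⟩
    have hk' := hk e
    simp only [Set.mem_Icc] at hi hj
    have := c.inj e j i (by omega) (by omega) h
    omega
  · rintro e w ⟨i, hi, h⟩
    have hk' := hk e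
    simp only [Set.mem_Icc] at hi
    have := c.brs hf e i w (by omega) h
    grind
  · rintro e w ⟨i, hi, h⟩
    have hk' := hk e
    simp only [Set.mem_Icc] at hi
    have := c.brs hf e i w (by omega) h
    grind
  · intro e e' hee x hx hx'
    have hx1 : ∃ i, i ≤ n e ∧ g e i = x := by
      have hk' := hk e
      rcases hx with ⟨i, hi, h⟩ | ⟨i, hi, h⟩ <;> simp only [Set.mem_Icc] at hi <;>
        exact ⟨i, by omega, h⟩
    have hx2 : ∃ i, i ≤ n e' ∧ g e' i = x := by
      have hk' := hk e'
      rcases hx' with ⟨i, hi, h⟩ | ⟨i, hi, h⟩ <;> simp only [Set.mem_Icc] at hi <;>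
        exact ⟨i, by omega, h⟩
    obtain ⟨i, hi, rfl⟩ := hx1
    obtain ⟨j, hj, h⟩ := hx2
    exact c.dis e e' i j hee hi hj h.symm
  · exact c.conn
  · exact c.Cf
  · intro e x hx
    have hk' := hk e
    rcases hx with ⟨i, hi, rfl⟩ | ⟨i, hi, rfl⟩ <;> simp only [Set.mem_Icc] at hi <;>
        exact c.Cg e i (by omega)
  · exact hxy
  · exact hyz
  · exact hxz
  · intro u hu
    obtain ⟨d, hd, r, hdr, hr⟩ := hadj u hu
    refine ⟨d, hd, r, hdr, hr.imp_right ?_⟩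
    rintro ⟨e, i, hi, rfl, h⟩
    refine ⟨e, h.imp ?_ ?_⟩
    · rintro ⟨h1, h2⟩; exact ⟨⟨i, by simpa using h1, rfl⟩, h2⟩
    · rintro ⟨h1, h2⟩; exact ⟨⟨i, by simp; omega, rfl⟩, h2⟩

/-- Ownership of a vertex outside the path `e0`. -/
theorem Cfg.owner (c : Cfg G src tgt f g n C) (o : Ori H src tgt)
    (e0 : E) (r : V) (hr : r ∈ Vs f g n) (hr0 : ∀ i, i ≤ n e0 → r ≠ g e0 i) :
    ∃ w, w ≠ src e0 ∧ w ≠ tgt e0 ∧ (r = f w ∨ ∃ e i, e ≠ e0 ∧ 0 < i ∧ i < n e ∧ r = g e i ∧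
      (w = src e ∨ w = tgt e)) := by
  by_cases hw : ∃ w, r = f w
  · obtain ⟨w, rfl⟩ := hw
    refine ⟨w, ?_, ?_, Or.inl rfl⟩
    · rintro rfl; exact hr0 0 (by omega) (c.g0 e0).symm
    · rintro rfl; exact hr0 _ le_rfl (c.gn e0).symm
  · obtain ⟨e, i, hi, rfl⟩ := hr.resolve_left hw
    have hi0 : i ≠ 0 := by rintro rfl; exact hw ⟨_, c.g0 e⟩
    have hin : i ≠ n e := by rintro rfl; exact hw ⟨_, c.gn e⟩
    have he : e ≠ e0 := by rintro rfl; exact hr0 i hi rfl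
    have h1 := o.uniq e e0 he
    have h2 := o.ne e
    have h3 := o.ne e0
    have : ∃ w, w ≠ src e0 ∧ w ≠ tgt e0 ∧ (w = src e ∨ w = tgt e) := by
      by_contra hcon
      have ha := fun h => hcon ⟨src e, h⟩
      have hb := fun h => hcon ⟨tgt e, h⟩
      clear hcon
      grind
    obtain ⟨w, hw1, hw2, hw3⟩ := this
    exact ⟨w, hw1, hw2, Or.inr ⟨e, i, he, by omega, by omega, rfl, hw3⟩⟩

theorem Cfg.case1a (c : Cfg G src tgt f g n C) (o : Ori H src tgt) (hf : Function.Injective f)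
    (e0 : E) (i j : ℕ) (hij : i < j) (hj : j ≤ n e0) (r : V) (hr : r ∈ Vs f g n)
    (hr0 : ∀ i, i ≤ n e0 → r ≠ g e0 i)
    (hi' : ∃ d ∈ C, G.Adj d (g e0 i)) (hj' : ∃ d ∈ C, G.Adj d (g e0 j))
    (hr' : ∃ d ∈ C, G.Adj d r) :
    ∃ x y z : U, x ≠ y ∧ y ≠ z ∧ x ≠ z ∧ IsMinor (triadAddition H x y z) G := by
  classical
  obtain ⟨w, hw1, hw2, hw⟩ := c.owner o e0 r hr hr0
  apply c.cutFinal o hf (fun e => if e = e0 then i else if w = src e then n e - 1 else 0)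
    ?_ (src e0) (tgt e0) w (o.ne e0) hw2.symm hw1.symm
  · rintro u (rfl | rfl | rfl)
    · obtain ⟨d, hd, h⟩ := hi'
      exact ⟨d, hd, _, h, Or.inr ⟨e0, i, by omega, rfl, Or.inl ⟨by simp, rfl⟩⟩⟩
    · obtain ⟨d, hd, h⟩ := hj'
      exact ⟨d, hd, _, h, Or.inr ⟨e0, j, by omega, rfl, Or.inr ⟨by simpa using hij, rfl⟩⟩⟩
    · obtain ⟨d, hd, h⟩ := hr'
      refine ⟨d, hd, _, h, hw.imp_right ?_⟩
      rintro ⟨e, i, he, hi0, hin, hre, hu⟩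
      refine ⟨e, i, hin.le, hre, ?_⟩
      simp only [he, if_false]
      by_cases hs : u = src e
      · left; simp only [hs, if_true, and_true]; omega
      · right; simp only [hs, if_false]; exact ⟨hi0, hu.resolve_left hs⟩
  · intro e
    have := c.npos o hf e
    split_ifs with h1 h2
    · subst h1; omega
    · omega
    · omega

theorem sdr (x1 x2 y1 y2 z1 z2 : U)
    (hxy : ¬ ((x1 = y1 ∧ x2 = y2) ∨ (x1 = y2 ∧ x2 = y1)))
    (hyz : ¬ ((y1 = z1 ∧ y2 = z2) ∨ (y1 = z2 ∧ y2 = z1)))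
    (hxz : ¬ ((x1 = z1 ∧ x2 = z2) ∨ (x1 = z2 ∧ x2 = z1)))
    (hx : x1 = x2 → x1 ≠ y1 ∧ x1 ≠ y2 ∧ x1 ≠ z1 ∧ x1 ≠ z2)
    (hy : y1 = y2 → y1 ≠ x1 ∧ y1 ≠ x2 ∧ y1 ≠ z1 ∧ y1 ≠ z2)
    (hz : z1 = z2 → z1 ≠ y1 ∧ z1 ≠ y2 ∧ z1 ≠ x1 ∧ z1 ≠ x2) :
    ∃ x y z, (x = x1 ∨ x = x2) ∧ (y = y1 ∨ y = y2) ∧ (z = z1 ∨ z = z2) ∧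
      x ≠ y ∧ y ≠ z ∧ x ≠ z := by
  by_contra hcon
  have h1 := fun h => hcon ⟨x1, y1, z1, h⟩
  have h2 := fun h => hcon ⟨x1, y1, z2, h⟩
  have h3 := fun h => hcon ⟨x1, y2, z1, h⟩
  have h4 := fun h => hcon ⟨x1, y2, z2, h⟩
  have h5 := fun h => hcon ⟨x2, y1, z1, h⟩
  have h6 := fun h => hcon ⟨x2, y1, z2, h⟩
  have h7 := fun h => hcon ⟨x2, y2, z1, h⟩
  have h8 := fun h => hcon ⟨x2, y2, z2, h⟩
  clear hcon
  simp only [true_or, or_true, true_and] at h1 h2 h3 h4 h5 h6 h7 h8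
  by_cases hx : x1 = x2 <;> by_cases hy : y1 = y2 <;> by_cases hz : z1 = z2 <;> grind

/-- `r` may be assigned to `r1` or to `r2`. -/
def Own (src tgt : E → U) (f : U → V) (g : E → ℕ → V) (n : E → ℕ) (r : V) (r1 r2 : U) : Prop :=
  (r = f r1 ∧ r2 = r1) ∨ ∃ e i, 0 < i ∧ i < n e ∧ r = g e i ∧ r1 = src e ∧ r2 = tgt e

theorem Cfg.exists_own (c : Cfg G src tgt f g n C) (r : V) (hr : r ∈ Vs f g n) :
    ∃ r1 r2, Own src tgt f g n r r1 r2 := by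
  by_cases hw : ∃ w, r = f w
  · obtain ⟨w, rfl⟩ := hw
    exact ⟨w, w, Or.inl ⟨rfl, rfl⟩⟩
  · obtain ⟨e, i, hi, rfl⟩ := hr.resolve_left hw
    have hi0 : i ≠ 0 := by rintro rfl; exact hw ⟨_, c.g0 e⟩
    have hin : i ≠ n e := by rintro rfl; exact hw ⟨_, c.gn e⟩
    exact ⟨_, _, Or.inr ⟨e, i, by omega, by omega, rfl, rfl, rfl⟩⟩

theorem Cfg.own_pair (c : Cfg G src tgt f g n C) (o : Ori H src tgt) {a b : V} {a1 a2 b1 b2 : U}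
    (ha : Own src tgt f g n a a1 a2) (hb : Own src tgt f g n b b1 b2) (hab : a ≠ b)
    (hno : ∀ e i j, i ≤ n e → j ≤ n e → a = g e i → b = g e j → False) :
    ¬ ((a1 = b1 ∧ a2 = b2) ∨ (a1 = b2 ∧ a2 = b1)) ∧ (a1 = a2 → a1 ≠ b1 ∧ a1 ≠ b2) ∧
      (b1 = b2 → b1 ≠ a1 ∧ b1 ≠ a2) := by
  rcases ha with ⟨rfl, rfl⟩ | ⟨e, i, hi, hin, rfl, rfl, rfl⟩
  · rcases hb with ⟨rfl, rfl⟩ | ⟨e', j, hj, hjn, rfl, rfl, rfl⟩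
    · have : a2 ≠ b2 := by rintro rfl; exact hab rfl
      grind
    · have h1 : a2 ≠ src e' := by
        rintro rfl; exact hno e' 0 j (by omega) hjn.le (c.g0 e').symm rfl
      have h2 : a2 ≠ tgt e' := by
        rintro rfl; exact hno e' _ j le_rfl hjn.le (c.gn e').symm rfl
      have := o.ne e'
      grind
  · rcases hb with ⟨rfl, rfl⟩ | ⟨e', j, hj, hjn, rfl, rfl, rfl⟩
    · have h1 : b2 ≠ src e := by
        rintro rfl; exact hno e i 0 hin.le (by omega) rfl (c.g0 e).symm
      have h2 : b2 ≠ tgt e := by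
        rintro rfl; exact hno e i _ hin.le le_rfl rfl (c.gn e).symm
      have := o.ne e
      grind
    · have he : e ≠ e' := by
        rintro rfl; exact hno e i j hin.le hjn.le rfl rfl
      have h1 := o.uniq e e' he
      have h2 := o.ne e
      have h3 := o.ne e'
      grind

theorem Cfg.case1b (c : Cfg G src tgt f g n C) (o : Ori H src tgt) (hf : Function.Injective f)
    (a : Fin 3 → V) (ha : Function.Injective a) (hV : ∀ s, a s ∈ Vs f g n)
    (hC : ∀ s, ∃ d ∈ C, G.Adj d (a s))
    (hno : ∀ s t, s ≠ t → ∀ e i j, i ≤ n e → j ≤ n e → a s = g e i → a t = g e j → False) :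
    ∃ x y z : U, x ≠ y ∧ y ≠ z ∧ x ≠ z ∧ IsMinor (triadAddition H x y z) G := by
  classical
  choose o1 o2 ho using fun s => c.exists_own (a s) (hV s)
  have hp := fun s t (h : s ≠ t) => c.own_pair o (ho s) (ho t) (ha.ne h) (hno s t h)
  have hx : ∃ x : Fin 3 → U, (∀ s, x s = o1 s ∨ x s = o2 s) ∧ x 0 ≠ x 1 ∧ x 1 ≠ x 2 ∧
      x 0 ≠ x 2 := by
    have h01 := hp 0 1 (by decide)
    have h12 := hp 1 2 (by decide)
    have h02 := hp 0 2 (by decide)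
    obtain ⟨x, y, z, hx, hy, hz, h⟩ := sdr (o1 0) (o2 0) (o1 1) (o2 1) (o1 2) (o2 2)
      h01.1 h12.1 h02.1
      (fun h => ⟨(h01.2.1 h).1, (h01.2.1 h).2, (h02.2.1 h).1, (h02.2.1 h).2⟩)
      (fun h => ⟨(h01.2.2 h).1, (h01.2.2 h).2, (h12.2.1 h).1, (h12.2.1 h).2⟩)
      (fun h => ⟨(h12.2.2 h).1, (h12.2.2 h).2, (h02.2.2 h).1, (h02.2.2 h).2⟩)
    refine ⟨![x, y, z], ?_, h⟩
    intro s
    fin_cases s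
    · exact hx
    · exact hy
    · exact hz
  obtain ⟨x, hx, hx01, hx12, hx02⟩ := hx
  let k : E → ℕ := fun e => if ∃ s, (∃ i, i ≤ n e ∧ a s = g e i) ∧ x s = src e then n e - 1 else 0
  have hadj : ∀ s, ∃ d ∈ C, ∃ r, G.Adj d r ∧
      (r = f (x s) ∨ ∃ e i, i ≤ n e ∧ r = g e i ∧
        ((i ≤ k e ∧ x s = src e) ∨ (k e < i ∧ x s = tgt e))) := by
    intro s
    obtain ⟨d, hd, h⟩ := hC s
    refine ⟨d, hd, a s, h, ?_⟩
    rcases ho s with ⟨h1, h2⟩ | ⟨e, i, hi, hin, hai, h1, h2⟩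
    · left
      have := hx s
      rw [h2, or_self] at this
      rw [this, h1]
    · right
      refine ⟨e, i, hin.le, hai, ?_⟩
      by_cases hs : x s = src e
      · left
        have : k e = n e - 1 := if_pos ⟨s, ⟨i, hin.le, hai⟩, hs⟩
        exact ⟨by omega, hs⟩
      · right
        have : k e = 0 := by
          apply if_neg
          rintro ⟨t, ⟨j, hj, haj⟩, ht⟩
          by_cases hst : s = t
          · subst hst; exact hs ht
          · exact hno s t hst e i j hin.le hj hai haj
        refine ⟨by omega, ?_⟩
        rcases hx s with h | h
        · exact absurd (h.trans h1) hs
        · exact h.trans h2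
  apply c.cutFinal o hf k ?_ (x 0) (x 1) (x 2) hx01 hx12 hx02
  · rintro u (rfl | rfl | rfl)
    exacts [hadj 0, hadj 1, hadj 2]
  · intro e
    have := c.npos o hf e
    simp only [k]
    split_ifs <;> omega

/-- Rerouting a path gives more room for `C`. -/
theorem Cfg.reroute (c : Cfg G src tgt f g n C) [Finite V]
    (e : E) (i m j : ℕ) (him : i < m) (hmj : m < j) (hj : j ≤ n e) (Q : Set V)
    (hQ : Conn G Q) (hQi : g e i ∈ Q) (hQj : g e j ∈ Q)
    (hQV : ∀ x ∈ Q, x ∈ Vs f g n → x = g e i ∨ x = g e j) (hQC : ∀ x ∈ Q, x ∉ C)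
    (hCm : ∃ d ∈ C, G.Adj d (g e m)) :
    ∃ g' n' C', Cfg G src tgt f g' n' C' ∧ C.ncard < C'.ncard := by
  classical
  let S : Set V := g e '' Set.Icc 0 i ∪ Q ∪ g e '' Set.Icc j (n e)
  have hS : Conn G S := by
    apply conn_union _ (conn_interval (c.adj e) j (n e) hj le_rfl) (g e j)
    · right; exact hQj
    · exact ⟨j, by simp [hj], rfl⟩
    · apply conn_union (conn_interval (c.adj e) 0 i (by omega) (by omega)) hQ (g e i) _ hQi
      exact ⟨i, by simp, rfl⟩
  have hSV : ∀ x ∈ S, x ∈ Vs f g n → ∃ l, (l ≤ i ∨ (j ≤ l ∧ l ≤ n e)) ∧ x = g e l := by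
    rintro x ((⟨l, hl, rfl⟩ | hx) | ⟨l, hl, rfl⟩) hxV
    · exact ⟨l, Or.inl hl.2, rfl⟩
    · rcases hQV x hx hxV with rfl | rfl
      · exact ⟨i, Or.inl le_rfl, rfl⟩
      · exact ⟨j, Or.inr ⟨le_rfl, hj⟩, rfl⟩
    · exact ⟨l, Or.inr ⟨hl.1, hl.2⟩, rfl⟩
  have hSC : ∀ x ∈ S, x ∉ C := by
    rintro x ((⟨l, hl, rfl⟩ | hx) | ⟨l, hl, rfl⟩)
    · exact c.Cg e l (by have := hl.2; omega)
    · exact hQC x hx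
    · exact c.Cg e l hl.2
  obtain ⟨p, hp, hpS⟩ := conn_path hS (s := f (src e)) (t := f (tgt e))
    (Or.inl (Or.inl ⟨0, by simp, c.g0 e⟩)) (Or.inr ⟨n e, by simp [hj], c.gn e⟩)
  have hpS' : ∀ l, p.getVert l ∈ S := fun l => hpS _ (p.getVert_mem_support l)
  let J : Set V := g e '' Set.Icc (i + 1) (j - 1)
  have hJ : Conn G J := conn_interval (c.adj e) _ _ (by omega) (by omega)
  have hJV : ∀ l, i + 1 ≤ l → l ≤ j - 1 → g e l ∉ S := by
    intro l h1 h2 h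
    obtain ⟨l', h3, h4⟩ := hSV _ h (Or.inr ⟨e, l, by omega, rfl⟩)
    have := c.inj e l l' (by omega) (by omega) h4
    omega
  obtain ⟨d, hd, hdm⟩ := hCm
  have hmJ : g e m ∈ J := ⟨m, by simp; omega, rfl⟩
  refine ⟨Function.update g e p.getVert, Function.update n e p.length, C ∪ J, ?_, ?_⟩
  · constructor
    · intro e'
      by_cases h : e' = e
      · subst h; simp
      · simp [h, c.g0]
    · intro e'
      by_cases h : e' = e
      · subst h; simp
      · simp [h, c.gn]
    · intro e' l
      by_cases h : e' = e
      · subst h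
        simp only [Function.update_self]
        exact fun hl => p.adj_getVert_succ hl
      · simp only [Function.update_of_ne h]
        exact c.adj e' l
    · intro e' l l'
      by_cases h : e' = e
      · subst h
        simp only [Function.update_self]
        exact fun hl hl' heq => hp.getVert_injOn hl hl' heq
      · simp only [Function.update_of_ne h]
        exact c.inj e' l l'
    · intro e' l w
      by_cases h : e' = e
      · subst h
        simp only [Function.update_self]
        intro hl hlw
        obtain ⟨l', h3, h4⟩ := hSV _ (hpS' l) (Or.inl ⟨w, hlw⟩)
        have h5 := c.br e' l' w (by omega) (h4.symm.trans hlw)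
        rcases h5 with rfl | rfl
        · left
          refine hp.getVert_injOn hl (by simp) ?_
          rw [h4, c.g0]; simp
        · right
          refine hp.getVert_injOn hl (by simp) ?_
          rw [h4, c.gn]; simp
      · simp only [Function.update_of_ne h]
        exact c.br e' l w
    · intro e1 e2 l1 l2 hne
      by_cases h1 : e1 = e
      · subst h1
        have h2 : e2 ≠ e1 := hne.symm
        simp only [Function.update_self, Function.update_of_ne h2]
        intro hl1 hl2 heq
        obtain ⟨l', h3, h4⟩ := hSV _ (hpS' l1) (Or.inr ⟨e2, l2, hl2, heq⟩)
        rw [h4]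
        exact c.dis e1 e2 l' l2 hne (by omega) hl2 (h4.symm.trans heq)
      · by_cases h2 : e2 = e
        · subst h2
          simp only [Function.update_self, Function.update_of_ne h1]
          intro hl1 hl2 heq
          obtain ⟨l', h3, h4⟩ := hSV _ (hpS' l2) (Or.inr ⟨e1, l1, hl1, heq.symm⟩)
          exact c.dis e1 e2 l1 l' hne hl1 (by omega) (heq.trans h4)
        · simp only [Function.update_of_ne h1, Function.update_of_ne h2]
          exact c.dis e1 e2 l1 l2 hne
    · exact conn_union_adj c.conn hJ hd hmJ hdm
    · rintro w (h | ⟨l, hl, h⟩)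
      · exact c.Cf w h
      · have := c.br e l w (by have := hl.2; omega) h
        have h1 := hl.1
        have h2 := hl.2
        omega
    · intro e' l
      by_cases h : e' = e
      · subst h
        simp only [Function.update_self]
        rintro hl (h | ⟨l', hl', h⟩)
        · exact hSC _ (hpS' l) h
        · exact hJV l' hl'.1 hl'.2 (h ▸ hpS' l)
      · simp only [Function.update_of_ne h]
        rintro hl (h' | ⟨l', hl', h'⟩)
        · exact c.Cg e' l hl h'
        · have h1 := hl'.1
          have h2 := hl'.2
          obtain ⟨w, hw⟩ := c.dis e e' l' l (Ne.symm h) (by omega) hl h'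
          have := c.br e l' w (by omega) hw
          omega
  · apply Set.ncard_lt_ncard _ (Set.toFinite _)
    refine ⟨Set.subset_union_left, fun h => ?_⟩
    exact c.Cg e m (by omega) (h (Or.inr hmJ))

theorem Cfg.case2b (c : Cfg G src tgt f g n C) (o : Ori H src tgt) (hf : Function.Injective f)
    (e0 : E) (a m b : ℕ) (ham : a < m) (hmb : m < b) (hb : b ≤ n e0)
    (ha' : ∃ d ∈ C, G.Adj d (g e0 a)) (hb' : ∃ d ∈ C, G.Adj d (g e0 b))
    (Q : Set V) (hQ : Conn G Q) (hQm : g e0 m ∈ Q) (hQV : ∀ x ∈ Q, x ∈ Vs f g n → x = g e0 m)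
    (hQC : ∀ x ∈ Q, x ∉ C)
    (r : V) (hr : r ∈ Vs f g n) (hr0 : ∀ i, i ≤ n e0 → r ≠ g e0 i)
    (hr' : ∃ d ∈ Q, G.Adj d r) :
    ∃ x y z : U, x ≠ y ∧ y ≠ z ∧ x ≠ z ∧ IsMinor (triadAddition H x y z) G := by
  classical
  obtain ⟨w, hw1, hw2, hw⟩ := c.owner o e0 r hr hr0
  let k : E → ℕ := fun e => if w = src e then n e - 1 else 0
  have hk : ∀ e, k e < n e := by
    intro e
    have := c.npos o hf e
    simp only [k]
    split_ifs <;> omega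
  let L : E → Set V := fun e =>
    if e = e0 then g e0 '' Set.Icc 0 a ∪ C else g e '' Set.Icc 0 (k e)
  let R : E → Set V := fun e =>
    if e = e0 then g e0 '' Set.Icc b (n e0) else g e '' Set.Icc (k e + 1) (n e)
  have hL0 : L e0 = g e0 '' Set.Icc 0 a ∪ C := if_pos rfl
  have hR0 : R e0 = g e0 '' Set.Icc b (n e0) := if_pos rfl
  have hLe : ∀ e, e ≠ e0 → L e = g e '' Set.Icc 0 (k e) := fun e h => if_neg h
  have hRe : ∀ e, e ≠ e0 → R e = g e '' Set.Icc (k e + 1) (n e) := fun e h => if_neg h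
  let D : Set V := g e0 '' Set.Icc (a + 1) (b - 1) ∪ Q
  have hDm : ∀ x ∈ D, x ∉ C ∧ (x ∈ Vs f g n → ∃ i, a < i ∧ i < b ∧ x = g e0 i) := by
    rintro x (⟨i, hi, rfl⟩ | hx)
    · simp only [Set.mem_Icc] at hi
      exact ⟨c.Cg e0 i (by omega), fun _ => ⟨i, by omega, by omega, rfl⟩⟩
    · exact ⟨hQC x hx, fun h => ⟨m, ham, hmb, hQV x hx h⟩⟩
  have hLm : ∀ e x, x ∈ L e → (e = e0 ∧ x ∈ C) ∨
      ∃ i, i < n e ∧ x = g e i ∧ (e = e0 → i ≤ a) ∧ (e ≠ e0 → i ≤ k e) := by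
    intro e x hx
    by_cases h : e = e0
    · subst h
      rw [hL0] at hx
      rcases hx with ⟨i, hi, rfl⟩ | hx
      · exact Or.inr ⟨i, by have := hi.2; omega, rfl, fun _ => hi.2, fun h => absurd rfl h⟩
      · exact Or.inl ⟨rfl, hx⟩
    · rw [hLe e h] at hx
      obtain ⟨i, hi, rfl⟩ := hx
      have := hk e
      exact Or.inr ⟨i, by have := hi.2; omega, rfl, fun h' => absurd h' h, fun _ => hi.2⟩
  have hRm : ∀ e x, x ∈ R e →
      ∃ i, 0 < i ∧ i ≤ n e ∧ x = g e i ∧ (e = e0 → b ≤ i) ∧ (e ≠ e0 → k e < i) := by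
    intro e x hx
    by_cases h : e = e0
    · subst h
      rw [hR0] at hx
      obtain ⟨i, hi, rfl⟩ := hx
      exact ⟨i, by have := hi.1; omega, hi.2, rfl, fun _ => hi.1, fun h => absurd rfl h⟩
    · rw [hRe e h] at hx
      obtain ⟨i, hi, rfl⟩ := hx
      have := hi.1
      exact ⟨i, by omega, hi.2, rfl, fun h' => absurd h' h, fun _ => hi.1⟩
  have hLRm : ∀ e x, x ∈ L e ∪ R e → (e = e0 ∧ x ∈ C) ∨
      ∃ i, i ≤ n e ∧ x = g e i ∧ (e = e0 → i ≤ a ∨ b ≤ i) := by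
    rintro e x (h | h)
    · rcases hLm e x h with h | ⟨i, hi, h1, h2, -⟩
      · exact Or.inl h
      · exact Or.inr ⟨i, hi.le, h1, fun h => Or.inl (h2 h)⟩
    · obtain ⟨i, -, hi, h1, h2, -⟩ := hRm e x h
      exact Or.inr ⟨i, hi, h1, fun h => Or.inr (h2 h)⟩
  apply final src tgt o.hE f hf L R D
  · intro e
    by_cases h : e = e0
    · subst h
      rw [hL0]
      obtain ⟨d, hd, hda⟩ := ha'
      exact conn_union_adj (conn_interval (c.adj e) 0 a (by omega) (by omega)) c.conn
        (x := g e a) ⟨a, by simp, rfl⟩ hd hda.symm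
    · rw [hLe e h]
      exact conn_interval (c.adj e) _ _ (by omega) (hk e).le
  · intro e
    by_cases h : e = e0
    · subst h
      rw [hR0]
      exact conn_interval (c.adj e) _ _ hb le_rfl
    · rw [hRe e h]
      exact conn_interval (c.adj e) _ _ (hk e) le_rfl
  · intro e
    by_cases h : e = e0
    · subst h
      rw [hL0]
      exact Or.inl ⟨0, by simp, c.g0 e⟩
    · rw [hLe e h]
      exact ⟨0, by simp, c.g0 e⟩
  · intro e
    by_cases h : e = e0
    · subst h
      rw [hR0]
      exact ⟨n e, by simpa using hb, c.gn e⟩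
    · rw [hRe e h]
      exact ⟨n e, by have := hk e; simp; omega, c.gn e⟩
  · intro e
    by_cases h : e = e0
    · subst h
      rw [hL0, hR0]
      obtain ⟨d, hd, hdb⟩ := hb'
      exact ⟨d, Or.inr hd, _, ⟨b, by simpa using hb, rfl⟩, hdb⟩
    · rw [hLe e h, hRe e h]
      exact ⟨_, ⟨k e, by simp, rfl⟩, _, ⟨k e + 1, by have := hk e; simp; omega, rfl⟩,
        c.adj e _ (hk e)⟩
  · intro e x hx hx'
    obtain ⟨j, hj0, hj, rfl, hj1, hj2⟩ := hRm e _ hx'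
    rcases hLm e _ hx with ⟨-, h⟩ | ⟨i, hi, h1, h2, h3⟩
    · exact c.Cg e j hj h
    · have := c.inj e j i hj hi.le h1
      by_cases h : e = e0
      · have := h2 h; have := hj1 h; omega
      · have := h3 h; have := hj2 h; omega
  · intro e u hx
    rcases hLm e _ hx with ⟨-, h⟩ | ⟨i, hi, h1, h2, h3⟩
    · exact absurd h (c.Cf u)
    · have := c.brs hf e i u hi.le h1.symm
      rcases this with h | h
      · exact h.2
      · omega
  · intro e u hx
    obtain ⟨j, hj0, hj, h1, hj1, hj2⟩ := hRm e _ hx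
    have := c.brs hf e j u hj h1.symm
    rcases this with h | h
    · omega
    · exact h.2
  · intro e e' hee x hx hx'
    rcases hLRm e x hx with ⟨h1, h2⟩ | ⟨i, hi, rfl, -⟩
    · rcases hLRm e' x hx' with ⟨h3, h4⟩ | ⟨j, hj, rfl, -⟩
      · exact absurd (h1.trans h3.symm) hee
      · exact absurd h2 (c.Cg e' j hj)
    · rcases hLRm e' _ hx' with ⟨h3, h4⟩ | ⟨j, hj, h, -⟩
      · exact absurd h4 (c.Cg e i hi)
      · exact c.dis e e' i j hee hi hj h
  · exact conn_union (conn_interval (c.adj e0) _ _ (by omega) (by omega)) hQ (g e0 m)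
      ⟨m, by simp; omega, rfl⟩ hQm
  · intro u hu
    obtain ⟨i, h1, h2, h3⟩ := (hDm _ hu).2 (Or.inl ⟨u, rfl⟩)
    have := c.br e0 i u (by omega) h3.symm
    omega
  · intro e x hx hxD
    obtain ⟨hxC, hxV⟩ := hDm x hxD
    rcases hLRm e x hx with ⟨h1, h2⟩ | ⟨i, hi, rfl, h1⟩
    · exact hxC h2
    · obtain ⟨j, h2, h3, h4⟩ := hxV (Or.inr ⟨e, i, hi, rfl⟩)
      by_cases h : e = e0
      · subst h
        have := h1 rfl
        have := c.inj e i j hi (by omega) h4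
        omega
      · obtain ⟨u, hu⟩ := c.dis e0 e j i (Ne.symm h) (by omega) hi h4.symm
        have := c.br e0 j u (by omega) hu
        omega
  · exact o.ne e0
  · exact hw2.symm
  · exact hw1.symm
  · rintro u (rfl | rfl | rfl)
    · refine ⟨g e0 (a + 1), Or.inl ⟨a + 1, by simp; omega, rfl⟩, g e0 a,
        (c.adj e0 a (by omega)).symm, Or.inr ⟨e0, Or.inl ⟨?_, rfl⟩⟩⟩
      rw [hL0]; exact Or.inl ⟨a, by simp, rfl⟩
    · have h := c.adj e0 (b - 1) (by omega)
      rw [Nat.sub_add_cancel (by omega)] at h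
      refine ⟨g e0 (b - 1), Or.inl ⟨b - 1, by simp; omega, rfl⟩, g e0 b, h,
        Or.inr ⟨e0, Or.inr ⟨?_, rfl⟩⟩⟩
      rw [hR0]; exact ⟨b, by simpa using hb, rfl⟩
    · obtain ⟨d, hd, h⟩ := hr'
      refine ⟨d, Or.inr hd, _, h, hw.imp_right ?_⟩
      rintro ⟨e, i, he, hi0, hin, hre, hu⟩
      refine ⟨e, ?_⟩
      rw [hLe e he, hRe e he]
      by_cases hs : u = src e
      · left
        have : k e = n e - 1 := if_pos hs
        exact ⟨⟨i, by simp; omega, hre.symm⟩, hs⟩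
      · right
        have : k e = 0 := if_neg hs
        exact ⟨⟨i, by simp; omega, hre.symm⟩, hu.resolve_left hs⟩

theorem Cfg.step (c : Cfg G src tgt f g n C) (o : Ori H src tgt) (hf : Function.Injective f)
    [Fintype U] [Fintype V] (hU : 3 ≤ Fintype.card U) (h3 : KConnected G 3) :
    (∃ x y z : U, x ≠ y ∧ y ≠ z ∧ x ≠ z ∧ IsMinor (triadAddition H x y z) G) ∨
    ∃ g' n' C', Cfg G src tgt f g' n' C' ∧ C.ncard < C'.ncard := by
  classical
  by_contra hcon
  obtain ⟨hno, hmax⟩ := not_or.1 hcon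
  -- neighbours of `C` lie on the subdivision
  have hCV : ∀ d ∈ C, ∀ x, G.Adj d x → x ∉ C → x ∈ Vs f g n := by
    intro d hd x hdx hxC
    by_contra hx
    apply hmax
    refine ⟨g, n, C ∪ {x}, ?_, ?_⟩
    · refine ⟨c.g0, c.gn, c.adj, c.inj, c.br, c.dis, conn_insert c.conn hd hdx, ?_, ?_⟩
      · rintro w (h | h)
        · exact c.Cf w h
        · exact hx (Or.inl ⟨w, h.symm⟩)
      · rintro e i hi (h | h)
        · exact c.Cg e i hi h
        · exact hx (Or.inr ⟨e, i, hi, h.symm⟩)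
    · apply Set.ncard_lt_ncard _ (Set.toFinite _)
      exact ⟨Set.subset_union_left, fun h => hxC (h (Or.inr rfl))⟩
  have hVC : ∀ x ∈ Vs f g n, x ∉ C := by
    rintro x (⟨w, rfl⟩ | ⟨e, i, hi, rfl⟩)
    · exact c.Cf w
    · exact c.Cg e i hi
  obtain ⟨⟨d0, hd0⟩⟩ := c.conn.nonempty
  let N : Set V := {x | x ∈ Vs f g n ∧ ∃ d ∈ C, G.Adj d x}
  have hN : 3 ≤ N.ncard := by
    by_contra hlt
    push Not at hlt
    have : ∃ w, f w ∉ N := by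
      by_contra hall
      push Not at hall
      have h1 : (Set.range f).ncard ≤ N.ncard :=
        Set.ncard_le_ncard (by rintro _ ⟨w, rfl⟩; exact hall w) (Set.toFinite _)
      rw [← Set.image_univ, Set.ncard_image_of_injective _ hf, Set.ncard_univ,
        Nat.card_eq_fintype_card] at h1
      omega
    obtain ⟨w, hw⟩ := this
    obtain ⟨m, hm, z, hz, hzN, hmz⟩ := cross h3 N C hlt hd0 (fun h => hVC _ h.1 hd0) (c.Cf w) hw
    exact hzN ⟨hCV m hm z hmz hz, m, hm, hmz⟩
  by_cases hcase : ∃ e i j, i < j ∧ j ≤ n e ∧ g e i ∈ N ∧ g e j ∈ N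
  · obtain ⟨e, i, j, hij, hj, hiN, hjN⟩ := hcase
    have hall : ∀ r ∈ N, ∃ l, l ≤ n e ∧ r = g e l := by
      intro r hr
      by_contra hl
      push Not at hl
      exact hno (c.case1a o hf e i j hij hj r hr.1 hl hiN.2 hjN.2 hr.2)
    -- extreme attachments
    let I : Finset ℕ := (Finset.range (n e + 1)).filter fun l => g e l ∈ N
    have hI : ∀ l, l ∈ I ↔ l ≤ n e ∧ g e l ∈ N := by
      intro l; simp [I]
    have hiI : i ∈ I := (hI i).2 ⟨by omega, hiN⟩
    have hjI : j ∈ I := (hI j).2 ⟨hj, hjN⟩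
    obtain ⟨a, haI, hamin⟩ := I.exists_min_image id ⟨i, hiI⟩
    obtain ⟨b, hbI, hbmax⟩ := I.exists_max_image id ⟨i, hiI⟩
    simp only [id] at hamin hbmax
    have hai := hamin i hiI
    have hbj := hbmax j hjI
    obtain ⟨han, haN⟩ := (hI a).1 haI
    obtain ⟨hbn, hbN⟩ := (hI b).1 hbI
    let Rch : Set V := {y | ∃ m, a < m ∧ m < b ∧ ∃ Q, Conn G Q ∧ g e m ∈ Q ∧ y ∈ Q ∧
      (∀ x ∈ Q, x ∈ Vs f g n → x = g e m) ∧ ∀ x ∈ Q, x ∉ C}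
    have hself : ∀ m, a < m → m < b → g e m ∈ Rch := by
      intro m h1 h2
      refine ⟨m, h1, h2, {g e m}, conn_singleton G _, rfl, rfl, fun x hx _ => hx, ?_⟩
      rintro x rfl
      exact c.Cg e m (by omega)
    have hw : ∃ w, w ≠ src e ∧ w ≠ tgt e := by
      by_contra hall
      push Not at hall
      have h1 : (Finset.univ : Finset U) ⊆ {src e, tgt e} := by
        intro w _
        simp only [Finset.mem_insert, Finset.mem_singleton]
        by_cases h : w = src e
        · exact Or.inl h
        · exact Or.inr (hall w h)
      have h2 := (Finset.card_le_card h1).trans Finset.card_le_two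
      rw [Finset.card_univ] at h2
      omega
    obtain ⟨w, hws, hwt⟩ := hw
    have hwg : ∀ l, l ≤ n e → f w ≠ g e l := by
      intro l hl h
      rcases c.brs hf e l w hl h.symm with h | h
      · exact hws h.2
      · exact hwt h.2
    have hs2 : ({g e a, g e b} : Set V).ncard < 3 :=
      lt_of_le_of_lt (Set.ncard_insert_le _ _) (by simp)
    have hwM : f w ∉ C ∪ Rch := by
      rintro (h | ⟨m, hm1, hm2, Q, -, -, h2, h3, -⟩)
      · exact c.Cf w h
      · exact hwg m (by omega) (h3 _ h2 (Or.inl ⟨w, rfl⟩))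
    have hwab : f w ∉ ({g e a, g e b} : Set V) := by
      rintro (h | h)
      · exact hwg a han h
      · exact hwg b hbn h
    have hdab : d0 ∉ ({g e a, g e b} : Set V) := by
      rintro (h | h)
      · exact c.Cg e a han (h ▸ hd0)
      · exact c.Cg e b hbn (h ▸ hd0)
    obtain ⟨m, hm, z, hzM, hzab, hmz⟩ := cross h3 {g e a, g e b} (C ∪ Rch) hs2
      (Or.inl hd0) hdab hwM hwab
    have hzC : z ∉ C := fun h => hzM (Or.inl h)
    have hzR : z ∉ Rch := fun h => hzM (Or.inr h)
    have hzl : ∀ l, l ≤ n e → z = g e l → l < a ∨ b < l := by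
      rintro l hl rfl
      by_contra hl'
      have h1 : l ≠ a := by rintro rfl; exact hzab (Or.inl rfl)
      have h2 : l ≠ b := by rintro rfl; exact hzab (Or.inr rfl)
      exact hzR (hself l (by omega) (by omega))
    rcases hm with hm | ⟨k, hk1, hk2, Q, hQ, hQk, hQm, hQV, hQC⟩
    · have hzV := hCV m hm z hmz hzC
      obtain ⟨l, hl, hzg⟩ := hall z ⟨hzV, m, hm, hmz⟩
      have hlI : l ∈ I := (hI l).2 ⟨hl, hzg ▸ ⟨hzV, m, hm, hmz⟩⟩
      have h1 := hamin l hlI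
      have h2 := hbmax l hlI
      have h3 := hzl l hl hzg
      omega
    · have hQz : Conn G (Q ∪ {z}) := conn_insert hQ hQm hmz
      have hQzC : ∀ x ∈ Q ∪ {z}, x ∉ C := by
        rintro x (hx | rfl)
        · exact hQC x hx
        · exact hzC
      have hzV : z ∈ Vs f g n := by
        by_contra hzV
        refine hzR ⟨k, hk1, hk2, Q ∪ {z}, hQz, Or.inl hQk, Or.inr rfl, ?_, hQzC⟩
        rintro x (hx | rfl) hxV
        · exact hQV x hx hxV
        · exact absurd hxV hzV
      by_cases hze : ∃ l, l ≤ n e ∧ z = g e l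
      · obtain ⟨l, hl, rfl⟩ := hze
        rcases hzl l hl rfl with h | h
        · apply hmax
          refine c.reroute e l a k h hk1 (by omega) (Q ∪ {g e l}) hQz (Or.inr rfl) (Or.inl hQk)
            ?_ hQzC haN.2
          rintro x (hx | rfl) hxV
          · exact Or.inr (hQV x hx hxV)
          · exact Or.inl rfl
        · apply hmax
          refine c.reroute e k b l hk2 h (by omega) (Q ∪ {g e l}) hQz (Or.inl hQk) (Or.inr rfl)
            ?_ hQzC hbN.2
          rintro x (hx | rfl) hxV
          · exact Or.inl (hQV x hx hxV)
          · exact Or.inr rfl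
      · push Not at hze
        exact hno (c.case2b o hf e a k b hk1 hk2 hbn haN.2 hbN.2 Q hQ hQk hQV hQC z hzV hze
          ⟨m, hQm, hmz⟩)
  · obtain ⟨t, htN, ht⟩ := Set.exists_subset_card_eq hN
    obtain ⟨x, y, z, hxy, hxz, hyz, rfl⟩ := Set.ncard_eq_three.1 ht
    have hmem : ∀ s, ![x, y, z] s ∈ N := by
      intro s
      apply htN
      fin_cases s <;> simp
    apply hno
    apply c.case1b o hf ![x, y, z] ?_ (fun s => (hmem s).1) (fun s => (hmem s).2)
    · intro s t hst e i j hi hj h1 h2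
      apply hcase
      have h3 := hmem s
      have h4 := hmem t
      rw [h1] at h3
      rw [h2] at h4
      rcases lt_trichotomy i j with h | h | h
      · exact ⟨e, i, j, h, hj, h3, h4⟩
      · subst h
        have := h1.trans h2.symm
        fin_cases s <;> fin_cases t <;> simp_all
      · exact ⟨e, j, i, h, hi, h4, h3⟩
    · intro s t h
      fin_cases s <;> fin_cases t <;> simp_all

theorem Cfg.main (o : Ori H src tgt) (hf : Function.Injective f)
    [Fintype U] [Fintype V] (hU : 3 ≤ Fintype.card U) (h3 : KConnected G 3) (N : ℕ) :
    ∀ g n C, Cfg G src tgt f g n C → Fintype.card V ≤ C.ncard + N →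
    ∃ x y z : U, x ≠ y ∧ y ≠ z ∧ x ≠ z ∧ IsMinor (triadAddition H x y z) G := by
  induction N with
  | zero =>
    intro g n C c hC
    rcases c.step o hf hU h3 with h | ⟨g', n', C', c', h⟩
    · exact h
    · have := Set.ncard_le_card C'
      rw [Nat.card_eq_fintype_card] at this
      omega
  | succ N ih =>
    intro g n C c hC
    rcases c.step o hf hU h3 with h | ⟨g', n', C', c', h⟩
    · exact h
    · exact ih g' n' C' c' (by omega)

end

end Triad

/-- If a 3-connected graph `G` has a proper subgraph which is a subdivision of a graph
`H` with at least 3 vertices, then `G` has a triad addition of `H` as a minor. -/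
theorem stmt7 {U V : Type} [Fintype U] [Fintype V] (H : SimpleGraph U) (G : SimpleGraph V)
    (hU : 3 ≤ Fintype.card U) (h3 : KConnected G 3)
    (G' : G.Subgraph) (hsub : IsSubdivision G'.coe H)
    (hlt : G'.verts.ncard < Fintype.card V) :
    ∃ x y z : U, x ≠ y ∧ y ≠ z ∧ x ≠ z ∧ IsMinor (triadAddition H x y z) G := by
  classical
  obtain ⟨f, p, hpath, -, -, hbr, hdis, -, -⟩ := hsub
  obtain ⟨v, hv⟩ : ∃ v, v ∉ G'.verts := by
    by_contra hall
    push Not at hall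
    have : G'.verts = Set.univ := Set.eq_univ_of_forall hall
    rw [this, Set.ncard_univ, Nat.card_eq_fintype_card] at hlt
    omega
  let src : H.edgeSet → U := fun e => (Quot.out e.1).1
  let tgt : H.edgeSet → U := fun e => (Quot.out e.1).2
  have hst : ∀ e : H.edgeSet, s(src e, tgt e) = e.1 := fun e => Quot.out_eq e.1
  have hadj : ∀ e : H.edgeSet, H.Adj (src e) (tgt e) := by
    intro e
    rw [← SimpleGraph.mem_edgeSet, hst e]
    exact e.2
  have o : Triad.Ori H src tgt := by
    refine ⟨?_, fun e => (hadj e).ne, ?_⟩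
    · intro u v huv
      refine ⟨⟨s(u, v), huv⟩, ?_⟩
      have := hst ⟨s(u, v), huv⟩
      simpa only [Sym2.eq_iff] using this
    · intro e e' hee h
      apply hee
      apply Subtype.ext
      rw [← hst e, ← hst e']
      exact Sym2.eq_iff.2 h
  have hf : Function.Injective fun u => (f u).1 := Subtype.val_injective.comp f.injective
  refine Triad.Cfg.main o hf hU h3 (Fintype.card V)
    (fun e i => ((p (hadj e)).getVert i).1) (fun e => (p (hadj e)).length) {v} ?_ (by omega)
  constructor
  · intro e; simp
  · intro e; simp
  · intro e i hi
    exact G'.coe_adj_sub _ _ ((p (hadj e)).adj_getVert_succ hi)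
  · intro e i j hi hj h
    exact (hpath (hadj e)).getVert_injOn hi hj (Subtype.ext h)
  · intro e i w hi h
    have h' : (p (hadj e)).getVert i = f w := Subtype.ext h
    have := hbr (hadj e) w (h' ▸ Walk.getVert_mem_support _ i)
    rcases this with rfl | rfl
    · left
      refine (hpath (hadj e)).getVert_injOn hi (by simp) ?_
      rw [h']; simp
    · right
      refine (hpath (hadj e)).getVert_injOn hi (by simp) ?_
      rw [h']; simp
  · intro e e' i j hee hi hj h
    have h' : (p (hadj e)).getVert i = (p (hadj e')).getVert j := Subtype.ext h
    obtain ⟨w, hw⟩ := hdis (hadj e) (hadj e')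
      (by rw [hst e, hst e']; exact fun h => hee (Subtype.ext h)) _
      (Walk.getVert_mem_support _ i) (h' ▸ Walk.getVert_mem_support _ j)
    exact ⟨w, by rw [hw]⟩
  · exact Triad.conn_singleton G v
  · rintro w rfl
    exact hv (f w).2
  · rintro e i hi rfl
    exact hv (Subtype.property _)
end
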